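/- arXiv:2301.08547 — 2 statements merged into one kernel-verified Lean document; each statement's English description precedes it below -/
import Mathlib

section
/- Suppose every vertex of G has degree at most 6 and that there exists ε > 0 such that for every integer r ≥ 1 the ball B_r = {x ∈ V : d_G(0,x) ≤ r} satisfies 12εr ≤ R_eff(0, V∖B_r) ≤ r. Then two independent (unkilled) simple random walks X and Y on G, both started at 0, collide infinitely often with probability at least ε²/12; that is, P_{0,0}(Σ_{n≥0} 1(X_n = Y_n) = ∞) ≥ ε²/12. -/
open MeasureTheory ENNReal
open scoped Classical

noncomputable section

variable {V : Type*}

/-- One-step transition probabilities of the simple random walk on `G`. -/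
def srwStep (G : SimpleGraph V) [G.LocallyFinite] (x y : V) : ℝ≥0∞ :=
  if G.Adj x y then ((G.degree x : ℝ≥0∞))⁻¹ else 0

/-- Probability that the simple random walk started at `a` follows `w` for its
first `n` steps. -/
def srwCylProb (G : SimpleGraph V) [G.LocallyFinite] (a : V)
    {n : ℕ} (w : Fin (n + 1) → V) : ℝ≥0∞ :=
  (if w 0 = a then 1 else 0) * ∏ i : Fin n, srwStep G (w i.castSucc) (w i.succ)

/-- `ν` is the joint law of two independent simple random walks on `G` started at
`a` and `b`: a probability measure on pairs of trajectories with the correct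
finite-dimensional distributions. -/
def IsSRWPairLaw [MeasurableSpace V] (G : SimpleGraph V) [G.LocallyFinite]
    (a b : V) (ν : Measure (ℕ → V × V)) : Prop :=
  IsProbabilityMeasure ν ∧
    ∀ (n : ℕ) (w : Fin (n + 1) → V × V),
      ν {ω | ∀ i : Fin (n + 1), ω i = w i} =
        srwCylProb G a (fun i => (w i).1) * srwCylProb G b (fun i => (w i).2)

/-- The Dirichlet energy `ℰ(f,f) = (1/2) Σ_{x∼y} (f x - f y)²` of `f : V → ℝ`. -/
def energy (G : SimpleGraph V) (f : V → ℝ) : ℝ≥0∞ :=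
  (1 / 2) * ∑' p : V × V,
    if G.Adj p.1 p.2 then ENNReal.ofReal ((f p.1 - f p.2) ^ 2) else 0

/-- The effective resistance between `A₁` and `A₂` in `G`, every edge being a unit
resistor: its inverse is the infimum of the energies of finite-energy functions
that are `1` on `A₁` and `0` on `A₂`. -/
def effRes (G : SimpleGraph V) (A₁ A₂ : Set V) : ℝ≥0∞ :=
  (⨅ f ∈ {f : V → ℝ | energy G f ≠ ⊤ ∧ (∀ x ∈ A₁, f x = 1) ∧ ∀ x ∈ A₂, f x = 0},
    energy G f)⁻¹

/-!
Kill both walks on leaving a ball `B` of radius `r`. By reversibility the probability that two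
walks from `x` meet at time `n` is, up to a factor of the degree, the return probability of one walk
at time `2n`; hence the expected number of collisions of the killed walks from `x` is comparable to
their Green function at `(x, x)`, which is the effective resistance from `x` to the complement of
`B`. From the centre this is at least of order `r` by hypothesis, and from every point of `B` it is
at most the distance to the complement, that is, of order `r`. By the Markov property the second
moment of the number of collisions is then at most of order `r` times its mean, so by the
Paley–Zygmund inequality there are at least of order `r` collisions with probability bounded below.
Let `r → ∞`.
-/

section SecondMoment

variable {Ω : Type*} [MeasurableSpace Ω]

/-- The **Paley–Zygmund inequality**. -/
theorem sq_mul_lintegral_le_mul_measure_lt (ν : Measure Ω) [IsProbabilityMeasure ν]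
    {H : Ω → ℝ≥0∞} (hH : Measurable H) (htop : ∫⁻ ω, H ω ∂ν ≠ ⊤) (θ : ℝ≥0∞) :
    ((1 - θ) * ∫⁻ ω, H ω ∂ν) ^ 2 ≤
      (∫⁻ ω, H ω ^ 2 ∂ν) * ν {ω | θ * ∫⁻ ω, H ω ∂ν < H ω} := by
  set M := ∫⁻ ω, H ω ∂ν
  set A := {ω | θ * M < H ω}
  have hA : MeasurableSet A := measurableSet_lt measurable_const hH
  have h_split : M ≤ θ * M + ∫⁻ ω, H ω * A.indicator 1 ω ∂ν := calc
    M ≤ ∫⁻ ω, θ * M + H ω * A.indicator 1 ω ∂ν := by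
      refine lintegral_mono fun ω => ?_
      by_cases hω : ω ∈ A
      · simp [hω]
      · simpa [hω] using not_lt.1 hω
    _ = _ := by simp [lintegral_add_left measurable_const]
  have h_holder : ∫⁻ ω, H ω * A.indicator 1 ω ∂ν ≤
      (∫⁻ ω, H ω ^ 2 ∂ν) ^ (1 / 2 : ℝ) * (ν A) ^ (1 / 2 : ℝ) := by
    have h_sq (ω : Ω) : A.indicator (1 : Ω → ℝ≥0∞) ω ^ 2 = A.indicator 1 ω := by
      by_cases hω : ω ∈ A <;> simp [hω]
    simpa [h_sq, lintegral_indicator_one hA] using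
      ENNReal.lintegral_mul_le_Lp_mul_Lq ν Real.HolderConjugate.two_two hH.aemeasurable
        (measurable_one.indicator hA).aemeasurable
  calc ((1 - θ) * M) ^ 2
      = (M - θ * M) ^ 2 := by rw [ENNReal.sub_mul fun _ _ => htop, one_mul]
    _ ≤ ((∫⁻ ω, H ω ^ 2 ∂ν) ^ (1 / 2 : ℝ) * (ν A) ^ (1 / 2 : ℝ)) ^ 2 := by
      gcongr
      exact (tsub_le_iff_left.2 h_split).trans h_holder
    _ = _ := by
      rw [mul_pow, ← ENNReal.rpow_mul_natCast, ← ENNReal.rpow_mul_natCast]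
      norm_num

theorem tsum_ite_le_eq_tsum_add (a : ℕ → ℝ≥0∞) (m : ℕ) :
    ∑' n, (if m ≤ n then a n else 0) = ∑' k, a (m + k) := by
  rw [← (add_right_injective m).tsum_eq (f := fun n => if m ≤ n then a n else 0)]
  · simp
  · intro n hn
    have hmn : m ≤ n := by by_contra h; simp [h] at hn
    exact ⟨n - m, Nat.add_sub_cancel' hmn⟩

theorem sq_tsum_le_two_mul_tsum_mul_add (a : ℕ → ℝ≥0∞) :
    (∑' m, a m) ^ 2 ≤ 2 * ∑' m, ∑' k, a m * a (m + k) := by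
  have h_symm : (∑' m, ∑' n, if n ≤ m then a m * a n else 0) =
      ∑' m, ∑' n, if m ≤ n then a m * a n else 0 := by
    rw [ENNReal.tsum_comm]
    simp only [mul_comm]
  calc (∑' m, a m) ^ 2
      = ∑' m, ∑' n, a m * a n := by
        simp only [sq, ENNReal.tsum_mul_left, ENNReal.tsum_mul_right]
    _ ≤ ∑' m, ∑' n, ((if m ≤ n then a m * a n else 0) + if n ≤ m then a m * a n else 0) := by
      gcongr with m n
      rcases le_total m n with h | h <;> simp [h]
    _ = 2 * ∑' m, ∑' n, (if m ≤ n then a m * a n else 0) := by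
      simp only [ENNReal.tsum_add, h_symm, two_mul]
    _ = 2 * ∑' m, ∑' k, a m * a (m + k) := by
      simp only [tsum_ite_le_eq_tsum_add fun n => a _ * a n]

theorem lintegral_sq_tsum_indicator_le (ν : Measure Ω) {C : ℕ → Set Ω}
    (hC : ∀ n, MeasurableSet (C n)) {K : ℝ≥0∞}
    (hK : ∀ m, ∑' k, ν (C m ∩ C (m + k)) ≤ K * ν (C m)) :
    ∫⁻ ω, (∑' n, (C n).indicator (1 : Ω → ℝ≥0∞) ω) ^ 2 ∂ν ≤ 2 * K * ∑' n, ν (C n) := calc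
  _ ≤ ∫⁻ ω, 2 * ∑' m, ∑' k, (C m ∩ C (m + k)).indicator 1 ω ∂ν := by
    refine lintegral_mono fun ω => ?_
    simpa only [Set.inter_indicator_one, Pi.mul_apply] using
      sq_tsum_le_two_mul_tsum_mul_add fun n => (C n).indicator (1 : Ω → ℝ≥0∞) ω
  _ = 2 * ∑' m, ∑' k, ν (C m ∩ C (m + k)) := by
    have h_meas (m k : ℕ) : Measurable ((C m ∩ C (m + k)).indicator (1 : Ω → ℝ≥0∞)) :=
      measurable_one.indicator ((hC m).inter (hC (m + k)))
    rw [lintegral_const_mul _ (Measurable.tsum fun m => Measurable.tsum (h_meas m)),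
      lintegral_tsum fun m => (Measurable.tsum (h_meas m)).aemeasurable]
    simp_rw [lintegral_tsum fun k => (h_meas _ k).aemeasurable,
      lintegral_indicator_one ((hC _).inter (hC _))]
  _ ≤ 2 * ∑' m, K * ν (C m) := by gcongr with m; exact hK m
  _ = 2 * K * ∑' n, ν (C n) := by rw [ENNReal.tsum_mul_left, mul_assoc]

theorem tsum_measure_le_mul_measure_half_lt (ν : Measure Ω) [IsProbabilityMeasure ν]
    {C : ℕ → Set Ω} (hC : ∀ n, MeasurableSet (C n)) (htop : ∑' n, ν (C n) ≠ ⊤) {K : ℝ≥0∞}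
    (hK : ∀ m, ∑' k, ν (C m ∩ C (m + k)) ≤ K * ν (C m)) :
    ∑' n, ν (C n) ≤
      8 * K * ν {ω | (∑' n, ν (C n)) / 2 < ∑' n, (C n).indicator (1 : Ω → ℝ≥0∞) ω} := by
  set H : Ω → ℝ≥0∞ := fun ω => ∑' n, (C n).indicator 1 ω
  have h_meas (n : ℕ) : Measurable ((C n).indicator (1 : Ω → ℝ≥0∞)) :=
    measurable_one.indicator (hC n)
  have hH : Measurable H := Measurable.tsum h_meas
  have h_mean : ∫⁻ ω, H ω ∂ν = ∑' n, ν (C n) := by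
    rw [lintegral_tsum fun n => (h_meas n).aemeasurable]
    exact tsum_congr fun n => lintegral_indicator_one (hC n)
  have h_pz := sq_mul_lintegral_le_mul_measure_lt ν hH (h_mean ▸ htop) 2⁻¹
  rw [h_mean, ENNReal.one_sub_inv_two] at h_pz
  set M := ∑' n, ν (C n)
  rcases eq_or_ne M 0 with hM | hM
  · simp [hM]
  have h_event : {ω | 2⁻¹ * M < H ω} = {ω | M / 2 < H ω} := by
    simp only [div_eq_mul_inv, mul_comm]
  rw [h_event] at h_pz
  refine (ENNReal.mul_le_mul_iff_right hM htop).1 ?_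
  calc M * M
      = 4 * (2⁻¹ * M) ^ 2 := by
        rw [mul_pow, ← mul_assoc, ← ENNReal.inv_pow, show (2 : ℝ≥0∞) ^ 2 = 4 by norm_num,
          ENNReal.mul_inv_cancel (by norm_num) (by norm_num), one_mul, sq]
    _ ≤ 4 * (2 * K * M * ν {ω | M / 2 < H ω}) := by
      gcongr
      exact h_pz.trans (by gcongr; exact lintegral_sq_tsum_indicator_le ν hC hK)
    _ = M * (8 * K * ν {ω | M / 2 < H ω}) := by ring

end SecondMoment

section InfinitelyOften

theorem le_measure_eq_top_of_frequently {Ω : Type*} [MeasurableSpace Ω] {ν : Measure Ω}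
    [IsFiniteMeasure ν] {H : Ω → ℝ≥0∞} (hH : Measurable H) {a δ : ℝ≥0∞} (hδ : δ ≠ 0)
    (hδ_top : δ ≠ ⊤) (ha : ∃ᶠ r : ℕ in Filter.atTop, a ≤ ν {ω | δ * r < H ω}) :
    a ≤ ν {ω | H ω = ⊤} := by
  have h_iInter : {ω | H ω = ⊤} = ⋂ r : ℕ, {ω | δ * r < H ω} := by
    ext ω
    simp only [Set.mem_iInter, Set.mem_ofPred_eq]
    refine ⟨fun h r => h ▸ mul_lt_top hδ_top.lt_top (natCast_lt_top r), fun h => ?_⟩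
    by_contra h_top
    obtain ⟨r, hr⟩ := exists_nat_mul_gt hδ h_top
    exact (hr.trans (mul_comm δ r ▸ h r)).false
  have h_anti : Antitone fun r : ℕ => {ω | δ * r < H ω} := fun r s hrs ω hω =>
    (mul_le_mul_right (Nat.cast_le.2 hrs) δ).trans_lt hω
  rw [h_iInter]
  refine ge_of_tendsto' (tendsto_measure_iInter_atTop
    (fun r => (measurableSet_lt measurable_const hH).nullMeasurableSet) h_anti
    ⟨0, measure_ne_top _ _⟩) fun r => ?_
  obtain ⟨s, hrs, hs⟩ := Filter.frequently_atTop.1 ha r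
  exact hs.trans (measure_mono (h_anti hrs))

end InfinitelyOften

section SurvivalEvent

variable {S T : Type*}

/-- The event that a trajectory stays in the range of `e` up to time `n`, where it is at `e t`.
The chain killed on leaving the range of `e` is encoded by these events. -/
def survivalEvent (e : T → S) (n : ℕ) (t : T) : Set (ℕ → S) :=
  {ω | (∀ i ≤ n, ω i ∈ Set.range e) ∧ ω n = e t}

theorem survivalEvent_zero (e : T → S) (t : T) : survivalEvent e 0 t = {ω | ω 0 = e t} := by
  ext ω
  simp +contextual [survivalEvent]

theorem survivalEvent_succ (e : T → S) (n : ℕ) (t : T) :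
    survivalEvent e (n + 1) t = ⋃ u, survivalEvent e n u ∩ {ω | ω (n + 1) = e t} := by
  ext ω
  simp only [survivalEvent, Set.mem_iUnion, Set.mem_inter_iff, Set.mem_ofPred_eq]
  constructor
  · rintro ⟨h_stay, h_end⟩
    obtain ⟨u, hu⟩ := h_stay n (by omega)
    exact ⟨u, ⟨fun i hi => h_stay i (by omega), hu.symm⟩, h_end⟩
  · rintro ⟨u, ⟨h_stay, -⟩, h_end⟩
    refine ⟨fun i hi => ?_, h_end⟩
    obtain rfl | hi := Nat.le_succ_iff_eq_or_le.1 hi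
    · exact ⟨t, h_end.symm⟩
    · exact h_stay i hi

theorem dependsOn_survivalEvent (e : T → S) {m n : ℕ} (hmn : m ≤ n) (t : T) :
    DependsOn (· ∈ survivalEvent e m t) (Set.Iic n) := by
  intro ω ω' h
  have h_stay : (∀ i ≤ m, ω i ∈ Set.range e) ↔ ∀ i ≤ m, ω' i ∈ Set.range e :=
    forall₂_congr fun i hi => by rw [h i (hi.trans hmn)]
  simp only [survivalEvent, Set.mem_ofPred_eq, h_stay, h m hmn]

theorem disjoint_survivalEvent {e : T → S} (he : e.Injective) (n : ℕ) {s t : T} (hst : s ≠ t) :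
    Disjoint (survivalEvent e n s) (survivalEvent e n t) :=
  Set.disjoint_left.2 fun _ hs ht => hst (he (hs.2.symm.trans ht.2))

end SurvivalEvent

section MarkovLaw

theorem tsum_measure_inter_preimage_singleton {Ω β : Type*} [MeasurableSpace Ω]
    [MeasurableSpace β] [MeasurableSingletonClass β] [Countable β] (ν : Measure Ω) (B : Set Ω)
    {f : Ω → β} (hf : Measurable f) : ∑' b, ν (B ∩ f ⁻¹' {b}) = ν B := by
  have h_fiber (b : β) : MeasurableSet (f ⁻¹' {b}) := hf (measurableSet_singleton b)
  have h := tsum_measure_preimage_singleton (μ := ν.restrict B) Set.countable_univ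
    fun b _ => h_fiber b
  rw [tsum_univ fun b => ν.restrict B (f ⁻¹' {b}), Set.preimage_univ,
    Measure.restrict_apply_univ] at h
  simpa only [Measure.restrict_apply (h_fiber _), Set.inter_comm] using h

variable {S : Type*} [MeasurableSpace S] [MeasurableSingletonClass S]
  {π : S → S → ℝ≥0∞} {ν : Measure (ℕ → S)}

/-- `ν` is the law of a time-homogeneous Markov chain with transition probabilities `π`, started
from an arbitrary initial distribution. -/
def IsMarkovLaw (π : S → S → ℝ≥0∞) (ν : Measure (ℕ → S)) : Prop :=
  ∀ (n : ℕ) (w : ℕ → S),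
    ν {ω | ∀ i ≤ n + 1, ω i = w i} = ν {ω | ∀ i ≤ n, ω i = w i} * π (w n) (w (n + 1))

theorem measurableSet_of_dependsOn_Iic [Countable S] {A : Set (ℕ → S)} {n : ℕ}
    (hA : DependsOn (· ∈ A) (Set.Iic n)) : MeasurableSet A := by
  obtain ⟨P, hP⟩ := dependsOn_iff_exists_comp.1 hA
  have h_preim : A = Preorder.restrictLe (π := fun _ => S) n ⁻¹' {w | P w} := by
    ext ω
    exact (congrFun hP ω).to_iff
  rw [h_preim]
  exact Preorder.measurable_restrictLe n .of_discrete

/-- The Markov property extends from cylinders to all events of the past: split according to the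
trajectory up to time `n`. -/
theorem IsMarkovLaw.measure_inter_succ [Countable S] (hν : IsMarkovLaw π ν) {A : Set (ℕ → S)}
    {n : ℕ} (hA : DependsOn (· ∈ A) (Set.Iic n)) {x : S} (hx : A ⊆ {ω | ω n = x}) (y : S) :
    ν (A ∩ {ω | ω (n + 1) = y}) = ν A * π x y := by
  let past : (ℕ → S) → (Set.Iic n → S) := Preorder.restrictLe n
  have h_past : Measurable past := Preorder.measurable_restrictLe n
  rw [← tsum_measure_inter_preimage_singleton ν _ h_past,
    ← tsum_measure_inter_preimage_singleton ν A h_past, ← ENNReal.tsum_mul_right]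
  refine tsum_congr fun w => ?_
  obtain h_empty | ⟨ω₀, hω₀, rfl⟩ := (A ∩ past ⁻¹' {w}).eq_empty_or_nonempty
  · rw [Set.inter_right_comm, h_empty]
    simp
  have h_cyl : A ∩ past ⁻¹' {past ω₀} = {ω | ∀ i ≤ n, ω i = ω₀ i} := by
    ext ω
    have h_mem : ω ∈ past ⁻¹' {past ω₀} ↔ ∀ i ≤ n, ω i = ω₀ i := by
      simp [past, funext_iff, Preorder.restrictLe]
    rw [Set.mem_inter_iff, h_mem]
    exact ⟨And.right, fun h => ⟨(hA h).to_iff.2 hω₀, h⟩⟩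
  have h_cyl_succ : A ∩ {ω | ω (n + 1) = y} ∩ past ⁻¹' {past ω₀} =
      {ω | ∀ i ≤ n + 1, ω i = Function.update ω₀ (n + 1) y i} := by
    rw [Set.inter_right_comm, h_cyl]
    ext ω
    constructor
    · rintro ⟨h, rfl⟩ i hi
      obtain rfl | hi := Nat.le_succ_iff_eq_or_le.1 hi
      · simp
      · rw [h i hi, Function.update_of_ne (by omega)]
    · intro h
      refine ⟨fun i hi => ?_, by simpa using h (n + 1) le_rfl⟩
      rw [h i (by omega), Function.update_of_ne (by omega)]
  have h_update (i : ℕ) (hi : i ≤ n) : Function.update ω₀ (n + 1) y i = ω₀ i :=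
    Function.update_of_ne (by omega) _ _
  rw [h_cyl, h_cyl_succ, hν, h_update n le_rfl, hx hω₀, Function.update_self]
  congr 3 with ω
  exact forall₂_congr fun i hi => by rw [h_update i hi]

theorem measurableSet_survivalEvent [Countable S] {T : Type*} (e : T → S) (n : ℕ) (t : T) :
    MeasurableSet (survivalEvent e n t) :=
  measurableSet_of_dependsOn_Iic (dependsOn_survivalEvent e le_rfl t)

variable [Countable S] {T : Type*} [Fintype T] [DecidableEq T] {e : T → S}

theorem IsMarkovLaw.measure_survivalEvent_inter (hν : IsMarkovLaw π ν) (he : e.Injective)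
    (m k : ℕ) (s t : T) :
    ν (survivalEvent e m s ∩ survivalEvent e (m + k) t) =
      ν (survivalEvent e m s) * ((Matrix.of fun u v => π (e u) (e v)) ^ k) s t := by
  induction k generalizing t with
  | zero =>
    obtain rfl | hst := eq_or_ne s t
    · simp
    · simp [(disjoint_survivalEvent he m hst).inter_eq, hst]
  | succ k ih =>
    have h_meas (u : T) : MeasurableSet
        (survivalEvent e m s ∩ survivalEvent e (m + k) u ∩ {ω | ω (m + k + 1) = e t}) :=
      ((measurableSet_survivalEvent e m s).inter (measurableSet_survivalEvent e _ u)).inter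
        (measurableSet_eq_fun (measurable_pi_apply _) measurable_const)
    have h_disj : Pairwise (Function.onFun Disjoint fun u =>
        survivalEvent e m s ∩ survivalEvent e (m + k) u ∩ {ω | ω (m + k + 1) = e t}) :=
      fun u v huv => (disjoint_survivalEvent he (m + k) huv).mono
        (Set.inter_subset_left.trans Set.inter_subset_right)
        (Set.inter_subset_left.trans Set.inter_subset_right)
    have h_past (u : T) :
        DependsOn (· ∈ survivalEvent e m s ∩ survivalEvent e (m + k) u) (Set.Iic (m + k)) := by
      intro ω ω' h
      exact congrArg₂ And (dependsOn_survivalEvent e (by omega) s h)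
        (dependsOn_survivalEvent e le_rfl u h)
    calc ν (survivalEvent e m s ∩ survivalEvent e (m + (k + 1)) t)
        = ∑ u, ν (survivalEvent e m s ∩ survivalEvent e (m + k) u ∩
            {ω | ω (m + k + 1) = e t}) := by
          rw [← add_assoc, survivalEvent_succ, Set.inter_iUnion,
            ← tsum_fintype (L := .unconditional T), ← measure_iUnion h_disj h_meas]
          simp only [Set.inter_assoc]
      _ = ∑ u, ν (survivalEvent e m s ∩ survivalEvent e (m + k) u) * π (e u) (e t) :=
          Finset.sum_congr rfl fun u _ =>
            hν.measure_inter_succ (h_past u) (fun ω hω => hω.2.2) (e t)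
      _ = _ := by
          simp only [ih, pow_succ, Matrix.mul_apply, Finset.mul_sum, mul_assoc, Matrix.of_apply]

theorem IsMarkovLaw.measure_survivalEvent [IsProbabilityMeasure ν] (hν : IsMarkovLaw π ν)
    (he : e.Injective) {s : T} (hs : ν {ω | ω 0 = e s} = 1) (n : ℕ) (t : T) :
    ν (survivalEvent e n t) = ((Matrix.of fun u v => π (e u) (e v)) ^ n) s t := by
  rw [← survivalEvent_zero] at hs
  have h_start : ∀ᵐ ω ∂ν, ω ∈ survivalEvent e 0 s :=
    (mem_ae_iff_prob_eq_one (measurableSet_survivalEvent e 0 s)).2 hs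
  simpa [hs, Measure.measure_inter_eq_of_ae h_start] using
    hν.measure_survivalEvent_inter he 0 n s t

end MarkovLaw

section PairLaw

variable (G : SimpleGraph V) [G.LocallyFinite]

theorem srwCylProb_succ (a : V) (n : ℕ) (w : ℕ → V) :
    srwCylProb G a (fun i : Fin (n + 2) => w i) =
      srwCylProb G a (fun i : Fin (n + 1) => w i) * srwStep G (w n) (w (n + 1)) := by
  simp only [srwCylProb, Fin.prod_univ_castSucc (n := n), mul_assoc]
  rfl

variable {G} [MeasurableSpace V] {a b : V} {ν : Measure (ℕ → V × V)}

theorem IsSRWPairLaw.measure_cylinder (hν : IsSRWPairLaw G a b ν) (n : ℕ) (w : ℕ → V × V) :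
    ν {ω | ∀ i ≤ n, ω i = w i} = srwCylProb G a (fun i : Fin (n + 1) => (w i).1) *
      srwCylProb G b (fun i : Fin (n + 1) => (w i).2) := by
  simp only [← hν.2 n fun i => w i, Fin.forall_iff, Nat.lt_succ_iff]

theorem IsSRWPairLaw.isMarkovLaw (hν : IsSRWPairLaw G a b ν) :
    IsMarkovLaw (fun p q => srwStep G p.1 q.1 * srwStep G p.2 q.2) ν := by
  intro n w
  simp only [hν.measure_cylinder, srwCylProb_succ G _ n fun i => (w i).1,
    srwCylProb_succ G _ n fun i => (w i).2]
  ring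

theorem IsSRWPairLaw.measure_start (hν : IsSRWPairLaw G a b ν) : ν {ω | ω 0 = (a, b)} = 1 := by
  simpa [srwCylProb] using hν.measure_cylinder 0 fun _ => (a, b)

end PairLaw

section KilledWalk

open scoped NNReal Kronecker

variable (G : SimpleGraph V) [G.LocallyFinite] (B : Finset V)

/-- The transition matrix of the simple random walk killed on leaving `B`. -/
def killedWalk : Matrix B B ℝ≥0 :=
  .of fun x y => if G.Adj x y then (G.degree x : ℝ≥0)⁻¹ else 0

/-- The heat kernel of the walk killed on leaving `B`: its `n`-step transition probabilities
divided by the degree of the endpoint, which makes them symmetric. -/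
def killedHeatKernel (n : ℕ) : Matrix B B ℝ≥0 :=
  killedWalk G B ^ n * .diagonal fun y => (G.degree (y : V) : ℝ≥0)⁻¹

/-- The Green function of the walk killed on leaving `B`, normalised as in electrical network
theory, that is, by the degree of the endpoint. -/
def killedGreen (x y : B) : ℝ≥0∞ :=
  ∑' n, (killedHeatKernel G B n x y : ℝ≥0∞)

/-- The probability that two independent walks from `x` are at the same vertex at time `n` and have
both stayed in `B` until then. -/
def killedCollision (n : ℕ) (x : B) : ℝ≥0 :=
  ∑ y, (killedWalk G B ^ n) x y ^ 2

theorem coe_killedWalk (x y : B) : (killedWalk G B x y : ℝ≥0∞) = srwStep G x y := by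
  rw [killedWalk, srwStep, Matrix.of_apply]
  split_ifs with h
  · rw [ENNReal.coe_inv (by exact_mod_cast (G.degree_pos_iff_exists_adj _ |>.2 ⟨_, h⟩).ne'),
      ENNReal.coe_natCast]
  · rfl

theorem kronecker_pow {R m n : Type*} [CommSemiring R] [Fintype m] [Fintype n] [DecidableEq m]
    [DecidableEq n] (P : Matrix m m R) (Q : Matrix n n R) (k : ℕ) :
    (P ⊗ₖ Q) ^ k = (P ^ k) ⊗ₖ (Q ^ k) := by
  induction k with
  | zero => simp
  | succ k ih => rw [pow_succ, ih, ← Matrix.mul_kronecker_mul, ← pow_succ, ← pow_succ]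

theorem pair_srwStep_pow (n : ℕ) (x x' y y' : B) :
    ((Matrix.of fun u v : B × B => srwStep G u.1 v.1 * srwStep G u.2 v.2) ^ n) (x, x') (y, y') =
      (killedWalk G B ^ n) x y * (killedWalk G B ^ n) x' y' := by
  have h_coe : (Matrix.of fun u v : B × B => srwStep G u.1 v.1 * srwStep G u.2 v.2) =
      ENNReal.ofNNRealHom.mapMatrix (killedWalk G B ⊗ₖ killedWalk G B) := by
    ext u v
    exact (congrArg₂ _ (coe_killedWalk G B u.1 v.1) (coe_killedWalk G B u.2 v.2)).symm.trans
      (ENNReal.coe_mul _ _).symm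
  rw [h_coe, ← map_pow, kronecker_pow]
  exact ENNReal.coe_mul _ _

theorem killedHeatKernel_add (m n : ℕ) (x y : B) :
    killedHeatKernel G B (m + n) x y =
      ∑ z : B, (killedWalk G B ^ m) x z * (killedWalk G B ^ n) y z *
        (G.degree (z : V) : ℝ≥0)⁻¹ := by
  set Q := killedWalk G B
  set R := Matrix.diagonal fun y : B => (G.degree (y : V) : ℝ≥0)⁻¹
  have h_reversible : Q * R = R * Q.transpose := by
    ext x y
    simp [Q, R, killedWalk, G.adj_comm x, mul_comm]
  have h_pow : Q ^ n * R = R * (Q ^ n).transpose := by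
    rw [Matrix.transpose_pow]
    exact (SemiconjBy.pow_right (a := R) h_reversible.symm n).symm
  rw [killedHeatKernel, pow_add, mul_assoc, h_pow, ← mul_assoc, Matrix.mul_apply]
  simp only [R, Matrix.mul_diagonal, Matrix.transpose_apply, Q, mul_right_comm]

theorem killedHeatKernel_two_mul_le (n : ℕ) (x : B) :
    killedHeatKernel G B (2 * n) x x ≤ killedCollision G B n x := by
  rw [two_mul, killedHeatKernel_add, killedCollision]
  gcongr with y
  rw [sq]
  exact mul_le_of_le_one_right' (Nat.cast_inv_le_one _)

theorem two_mul_killedHeatKernel_two_mul_add_one_le (n : ℕ) (x : B) :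
    2 * killedHeatKernel G B (2 * n + 1) x x ≤
      killedCollision G B n x + killedCollision G B (n + 1) x := by
  rw [two_mul n, add_assoc, killedHeatKernel_add, killedCollision, killedCollision,
    ← Finset.sum_add_distrib, Finset.mul_sum]
  gcongr with y
  rw [← mul_assoc, ← mul_assoc]
  exact (mul_le_of_le_one_right' (Nat.cast_inv_le_one _)).trans (two_mul_le_add_sq _ _)

theorem killedGreen_self_le_two_mul_tsum_killedCollision (x : B) :
    killedGreen G B x x ≤ 2 * ∑' n, (killedCollision G B n x : ℝ≥0∞) := by
  have h_even : ∑' n, (killedHeatKernel G B (2 * n) x x : ℝ≥0∞) ≤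
      ∑' n, (killedCollision G B n x : ℝ≥0∞) := by
    gcongr with n
    exact killedHeatKernel_two_mul_le G B n x
  have h_odd : 2 * ∑' n, (killedHeatKernel G B (2 * n + 1) x x : ℝ≥0∞) ≤
      2 * ∑' n, (killedCollision G B n x : ℝ≥0∞) := calc
    _ ≤ ∑' n, ((killedCollision G B n x : ℝ≥0∞) + killedCollision G B (n + 1) x) := by
      rw [← ENNReal.tsum_mul_left]
      gcongr with n
      exact_mod_cast two_mul_killedHeatKernel_two_mul_add_one_le G B n x
    _ ≤ _ := by
      rw [ENNReal.tsum_add, two_mul]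
      exact add_le_add le_rfl
        (ENNReal.tsum_comp_le_tsum_of_injective (add_left_injective 1)
          fun n => (killedCollision G B n x : ℝ≥0∞))
  rw [killedGreen, ← tsum_even_add_odd ENNReal.summable ENNReal.summable, two_mul]
  exact add_le_add h_even ((ENNReal.mul_le_mul_iff_right two_ne_zero ofNat_ne_top).1 h_odd)

theorem killedCollision_le_mul_killedHeatKernel {D : ℕ} (hD : ∀ x, G.degree x ≤ D)
    (hpos : ∀ x, 0 < G.degree x) (n : ℕ) (x : B) :
    killedCollision G B n x ≤ D * killedHeatKernel G B (2 * n) x x := by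
  rw [two_mul, killedHeatKernel_add, killedCollision, Finset.mul_sum]
  gcongr with y
  have hy : (1 : ℝ≥0) ≤ D * (G.degree (y : V) : ℝ≥0)⁻¹ := by
    rw [← div_eq_mul_inv, one_le_div (by exact_mod_cast hpos y)]
    exact_mod_cast hD y
  calc (killedWalk G B ^ n) x y ^ 2
      ≤ (killedWalk G B ^ n) x y ^ 2 * (D * (G.degree (y : V) : ℝ≥0)⁻¹) :=
        le_mul_of_one_le_right' hy
    _ = _ := by ring

theorem tsum_killedCollision_le_mul_killedGreen {D : ℕ} (hD : ∀ x, G.degree x ≤ D)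
    (hpos : ∀ x, 0 < G.degree x) (x : B) :
    ∑' n, (killedCollision G B n x : ℝ≥0∞) ≤ D * killedGreen G B x x := calc
  _ ≤ ∑' n, (D * killedHeatKernel G B (2 * n) x x : ℝ≥0∞) := by
    gcongr with n
    exact_mod_cast killedCollision_le_mul_killedHeatKernel G B hD hpos n x
  _ ≤ D * killedGreen G B x x := by
    rw [ENNReal.tsum_mul_left]
    gcongr
    exact ENNReal.tsum_comp_le_tsum_of_injective (mul_right_injective₀ two_ne_zero) _

end KilledWalk

section Energy

theorem sq_sub_le_length_mul_sum_darts {G : SimpleGraph V} (f : V → ℝ) {x y : V} {p : G.Walk x y}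
    (hp : p.IsTrail) :
    (f x - f y) ^ 2 ≤ p.length * ∑ d ∈ p.darts.toFinset, (f d.fst - f d.snd) ^ 2 := by
  have h_telescope {x y : V} (p : G.Walk x y) :
      (p.darts.map fun d => f d.fst - f d.snd).sum = f x - f y := by
    induction p with
    | nil => simp
    | cons h p ih => simp [ih]
  have h_nodup : p.darts.Nodup := hp.edges_nodup.of_map _
  rw [← h_telescope p, ← List.sum_toFinset _ h_nodup, ← p.length_darts,
    ← List.toFinset_card_of_nodup h_nodup]
  exact sq_sum_le_card_mul_sum_sq

/-- The darts of a trail and their reverses are pairwise distinct. -/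
theorem two_mul_sum_darts_le_tsum {G : SimpleGraph V} {x y : V} {p : G.Walk x y} (hp : p.IsTrail)
    (a : V × V → ℝ≥0∞) (ha : ∀ q, a q.swap = a q) :
    2 * ∑ d ∈ p.darts.toFinset, a d.toProd ≤ ∑' q : V × V, if G.Adj q.1 q.2 then a q else 0 := by
  set s := p.darts.toFinset
  have h_disj : Disjoint s (s.image SimpleGraph.Dart.symm) := by
    rw [Finset.disjoint_right]
    intro d hd hd'
    obtain ⟨d', hds, rfl⟩ := Finset.mem_image.1 hd
    have h_edge : d'.symm = d' := List.inj_on_of_nodup_map hp.edges_nodup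
      (by simpa [s] using hd') (by simpa [s] using hds) d'.edge_symm
    exact d'.symm_ne h_edge
  calc 2 * ∑ d ∈ s, a d.toProd
      = ∑ d ∈ s ∪ s.image SimpleGraph.Dart.symm, a d.toProd := by
        rw [Finset.sum_union h_disj,
          Finset.sum_image SimpleGraph.Dart.symm_involutive.injective.injOn]
        simp [two_mul, ha]
    _ ≤ ∑' d : G.Dart, if G.Adj d.fst d.snd then a d.toProd else 0 := by
        simpa using ENNReal.sum_le_tsum (f := fun d : G.Dart => a d.toProd) _
    _ ≤ _ := ENNReal.tsum_comp_le_tsum_of_injective SimpleGraph.Dart.toProd_injective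
        fun q : V × V => if G.Adj q.1 q.2 then a q else 0

theorem ofReal_sq_sub_le_dist_mul_energy {G : SimpleGraph V} (hconn : G.Connected) (f : V → ℝ)
    (x y : V) : ENNReal.ofReal ((f x - f y) ^ 2) ≤ G.dist x y * energy G f := by
  obtain ⟨p, hp, h_len⟩ := hconn.exists_path_of_dist x y
  calc ENNReal.ofReal ((f x - f y) ^ 2)
      ≤ ENNReal.ofReal (p.length * ∑ d ∈ p.darts.toFinset, (f d.fst - f d.snd) ^ 2) :=
        ENNReal.ofReal_le_ofReal (sq_sub_le_length_mul_sum_darts f hp.isTrail)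
    _ = G.dist x y * (2⁻¹ * (2 * ∑ d ∈ p.darts.toFinset,
          ENNReal.ofReal ((f d.fst - f d.snd) ^ 2))) := by
        rw [ENNReal.ofReal_mul p.length.cast_nonneg, ENNReal.ofReal_natCast, h_len,
          ENNReal.ofReal_sum_of_nonneg fun _ _ => sq_nonneg _, ← mul_assoc 2⁻¹,
          ENNReal.inv_mul_cancel two_ne_zero ofNat_ne_top, one_mul]
    _ ≤ G.dist x y * energy G f := by
        rw [energy, one_div]
        gcongr
        exact two_mul_sum_darts_le_tsum hp.isTrail (fun q => ENNReal.ofReal ((f q.1 - f q.2) ^ 2))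
          fun q => by rw [Prod.fst_swap, Prod.snd_swap, ← neg_sub, neg_sq]

variable (G : SimpleGraph V) [G.LocallyFinite] (B : Finset V)

open Matrix

/-- The graph Laplacian on `B` with Dirichlet boundary conditions. -/
def dirichletLaplacian : Matrix B B ℝ :=
  .of fun x y => (if x = y then (G.degree (x : V) : ℝ) else 0) - if G.Adj x y then 1 else 0

variable {G B}

theorem isSymm_dirichletLaplacian : (dirichletLaplacian G B).IsSymm := by
  ext x y
  by_cases hxy : x = y
  · rw [hxy, transpose_apply]
  · simp [dirichletLaplacian, hxy, Ne.symm hxy, G.adj_comm]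

theorem hasSum_mul_sub_dirichletLaplacian {f : V → ℝ} (hf : ∀ x ∉ B, f x = 0) :
    HasSum (fun p : V × V => if G.Adj p.1 p.2 then f p.1 * (f p.1 - f p.2) else 0)
      (B.restrict f ⬝ᵥ dirichletLaplacian G B *ᵥ B.restrict f) := by
  set W := B ∪ B.biUnion fun x => G.neighborFinset x
  have h_nbr {x : V} (hx : x ∈ B) : W.filter (G.Adj x) = G.neighborFinset x := by
    ext y
    simp only [W, Finset.mem_filter, Finset.mem_union, Finset.mem_biUnion,
      SimpleGraph.mem_neighborFinset, and_iff_right_iff_imp]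
    exact fun hxy => .inr ⟨x, hx, hxy⟩
  have h_supp (p : V × V) (hp : p ∉ B ×ˢ W) :
      (if G.Adj p.1 p.2 then f p.1 * (f p.1 - f p.2) else 0) = 0 := by
    by_cases hB : p.1 ∈ B
    · refine if_neg fun h_adj => hp (Finset.mem_product.2 ⟨hB, ?_⟩)
      exact (Finset.mem_filter.1 (h_nbr hB ▸ (G.mem_neighborFinset _ _).2 h_adj)).1
    · simp [hf _ hB]
  have h_row {x : V} (hx : x ∈ B) :
      ∑ y ∈ W, (if G.Adj x y then f x * (f x - f y) else 0) =
        f x * (G.degree x * f x - ∑ y ∈ B, if G.Adj x y then f y else 0) := by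
    have h_cross : ∑ y ∈ B, (if G.Adj x y then f y else 0) =
        ∑ y ∈ W, if G.Adj x y then f y else 0 :=
      Finset.sum_subset Finset.subset_union_left fun y _ hy => by simp [hf y hy]
    rw [h_cross, ← Finset.sum_filter, ← Finset.sum_filter, h_nbr hx, ← Finset.mul_sum,
      Finset.sum_sub_distrib, Finset.sum_const, G.card_neighborFinset_eq_degree, nsmul_eq_mul]
  convert hasSum_sum_of_ne_finset_zero (L := .unconditional _) h_supp
  rw [Finset.sum_product, Finset.sum_congr rfl fun x hx => h_row hx, ← Finset.sum_coe_sort]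
  refine Finset.sum_congr rfl fun x _ => ?_
  simp [dirichletLaplacian, mulVec, dotProduct, sub_mul, Finset.sum_sub_distrib,
    ← Finset.sum_coe_sort B]

theorem hasSum_sq_sub_dirichletLaplacian {f : V → ℝ} (hf : ∀ x ∉ B, f x = 0) :
    HasSum (fun p : V × V => if G.Adj p.1 p.2 then (f p.1 - f p.2) ^ 2 else 0)
      (2 * (B.restrict f ⬝ᵥ dirichletLaplacian G B *ᵥ B.restrict f)) := by
  have h := hasSum_mul_sub_dirichletLaplacian (G := G) hf
  rw [two_mul]
  convert h.add ((Equiv.prodComm V V).hasSum_iff.2 h) using 2 with p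
  by_cases hp : G.Adj p.1 p.2
  · simp only [Function.comp, Equiv.prodComm_apply, Prod.fst_swap, Prod.snd_swap, hp, hp.symm,
      if_true]
    ring
  · simp [hp, G.adj_comm p.2]

theorem energy_eq_ofReal_dirichletLaplacian {f : V → ℝ} (hf : ∀ x ∉ B, f x = 0) :
    energy G f = ENNReal.ofReal (B.restrict f ⬝ᵥ dirichletLaplacian G B *ᵥ B.restrict f) := by
  have h := hasSum_sq_sub_dirichletLaplacian (G := G) hf
  have h_tsum := ENNReal.ofReal_tsum_of_nonneg
    (f := fun p : V × V => if G.Adj p.1 p.2 then (f p.1 - f p.2) ^ 2 else 0)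
    (fun p => by positivity) h.summable
  simp only [apply_ite ENNReal.ofReal, ENNReal.ofReal_zero] at h_tsum
  rw [energy, ← h_tsum, h.tsum_eq, ENNReal.ofReal_mul two_pos.le, ENNReal.ofReal_ofNat,
    ← mul_assoc, one_div, ENNReal.inv_mul_cancel two_ne_zero ofNat_ne_top, one_mul]

theorem exists_restrict_eq_and_eq_zero (u : B → ℝ) :
    ∃ f : V → ℝ, B.restrict f = u ∧ ∀ x ∉ B, f x = 0 :=
  ⟨Function.extend Subtype.val u 0, funext fun x => Subtype.val_injective.extend_apply u 0 x,
    fun x hx => Function.extend_apply' _ _ _ (by simpa using hx)⟩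

theorem dirichletLaplacian_nonneg (u : B → ℝ) : 0 ≤ u ⬝ᵥ dirichletLaplacian G B *ᵥ u := by
  obtain ⟨f, rfl, hf⟩ := exists_restrict_eq_and_eq_zero u
  have h := (hasSum_sq_sub_dirichletLaplacian (G := G) hf).nonneg fun p => by positivity
  linarith

theorem sq_dirichletLaplacian_le (u v : B → ℝ) :
    (u ⬝ᵥ dirichletLaplacian G B *ᵥ v) ^ 2 ≤
      (u ⬝ᵥ dirichletLaplacian G B *ᵥ u) * (v ⬝ᵥ dirichletLaplacian G B *ᵥ v) := by
  have h_symm : LinearMap.IsSymm (toBilin' (dirichletLaplacian G B)) := ⟨fun u v => by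
    rw [RingHom.id_apply, toBilin'_apply', toBilin'_apply', dotProduct_mulVec, dotProduct_comm,
      ← mulVec_transpose, isSymm_dirichletLaplacian]⟩
  simpa only [toBilin'_apply'] using LinearMap.BilinForm.apply_sq_le_of_symm _
    (fun u => by simpa only [toBilin'_apply'] using dirichletLaplacian_nonneg u) h_symm u v

theorem sq_le_dist_mul_dirichletLaplacian (hconn : G.Connected) (u : B → ℝ) (y : B) {z : V}
    (hz : z ∉ B) : u y ^ 2 ≤ G.dist (y : V) z * (u ⬝ᵥ dirichletLaplacian G B *ᵥ u) := by
  obtain ⟨f, rfl, hf⟩ := exists_restrict_eq_and_eq_zero u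
  have h := ofReal_sq_sub_le_dist_mul_energy hconn f y z
  rw [hf z hz, sub_zero, energy_eq_ofReal_dirichletLaplacian hf, ← ENNReal.ofReal_natCast,
    ← ENNReal.ofReal_mul (Nat.cast_nonneg _)] at h
  exact (ENNReal.ofReal_le_ofReal_iff
    (mul_nonneg (Nat.cast_nonneg _) (dirichletLaplacian_nonneg _))).1 h

end Energy

section GreenPotential

open Matrix
open scoped NNReal

variable (G : SimpleGraph V) [G.LocallyFinite] (B : Finset V)

/-- The expected numbers of visits to the vertices of `B` before time `N` by the walk killed on
leaving `B`, normalised as `killedGreen`. -/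
def truncatedGreen (N : ℕ) : Matrix B B ℝ :=
  ∑ n ∈ Finset.range N, (killedHeatKernel G B n).map (↑)

variable {G B}

theorem ofReal_truncatedGreen_le_killedGreen (N : ℕ) (x y : B) :
    ENNReal.ofReal (truncatedGreen G B N x y) ≤ killedGreen G B x y := by
  simp only [truncatedGreen, Matrix.sum_apply, map_apply, killedGreen]
  rw [ENNReal.ofReal_sum_of_nonneg fun _ _ => NNReal.coe_nonneg _]
  simpa only [ENNReal.ofReal_coe_nnreal] using ENNReal.sum_le_tsum _

theorem truncatedGreen_mul_dirichletLaplacian (hpos : ∀ x, 0 < G.degree x) (N : ℕ) :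
    truncatedGreen G B N * dirichletLaplacian G B =
      1 - (killedWalk G B ^ N).map ((↑) : ℝ≥0 → ℝ) := by
  set P : Matrix B B ℝ := NNReal.toRealHom.mapMatrix (killedWalk G B)
  have h_pow (n : ℕ) : (killedWalk G B ^ n).map ((↑) : ℝ≥0 → ℝ) = P ^ n :=
    map_pow NNReal.toRealHom.mapMatrix _ n
  have h_kernel (n : ℕ) : (killedHeatKernel G B n).map ((↑) : ℝ≥0 → ℝ) =
      P ^ n * diagonal fun y : B => (G.degree (y : V) : ℝ)⁻¹ := by
    ext x y
    simp [killedHeatKernel, ← h_pow]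
  have h_laplacian : diagonal (fun y : B => (G.degree (y : V) : ℝ)⁻¹) * dirichletLaplacian G B =
      1 - P := by
    ext x y
    rw [diagonal_mul]
    obtain rfl | hxy := eq_or_ne x y
    · have hx : (G.degree (x : V) : ℝ) ≠ 0 := by exact_mod_cast (hpos x).ne'
      simp [dirichletLaplacian, P, killedWalk, hx]
    · by_cases h_adj : G.Adj x y <;> simp [dirichletLaplacian, P, killedWalk, hxy, h_adj]
  rw [h_pow, truncatedGreen, Finset.sum_mul]
  simp_rw [h_kernel, mul_assoc, h_laplacian, ← Finset.sum_mul]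
  exact geom_sum_mul_neg P N

theorem truncatedGreen_dotProduct_dirichletLaplacian (hpos : ∀ x, 0 < G.degree x) (N : ℕ) (x : B)
    (u : B → ℝ) :
    truncatedGreen G B N x ⬝ᵥ dirichletLaplacian G B *ᵥ u =
      u x - ∑ y, (killedWalk G B ^ N) x y * u y := by
  have h : truncatedGreen G B N *ᵥ (dirichletLaplacian G B *ᵥ u) =
      u - (killedWalk G B ^ N).map ((↑) : ℝ≥0 → ℝ) *ᵥ u := by
    rw [mulVec_mulVec, truncatedGreen_mul_dirichletLaplacian hpos, sub_mulVec, one_mulVec]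
  exact congrFun h x

theorem truncatedGreen_energy_le (hpos : ∀ x, 0 < G.degree x) (N : ℕ) (x : B) :
    truncatedGreen G B N x ⬝ᵥ dirichletLaplacian G B *ᵥ truncatedGreen G B N x ≤
      truncatedGreen G B N x x := by
  rw [truncatedGreen_dotProduct_dirichletLaplacian hpos, sub_le_self_iff]
  refine Finset.sum_nonneg fun y _ => mul_nonneg (NNReal.coe_nonneg _) ?_
  simp only [truncatedGreen, Matrix.sum_apply, map_apply]
  exact Finset.sum_nonneg fun n _ => NNReal.coe_nonneg _

theorem killedGreen_self_le_dist (hconn : G.Connected) (hpos : ∀ x, 0 < G.degree x) (x : B) {z : V}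
    (hz : z ∉ B) : killedGreen G B x x ≤ G.dist (x : V) z := by
  have h_trunc (N : ℕ) : truncatedGreen G B N x x ≤ G.dist (x : V) z := by
    have h_sq := (sq_le_dist_mul_dirichletLaplacian hconn (truncatedGreen G B N x) x hz).trans
      (mul_le_mul_of_nonneg_left (truncatedGreen_energy_le hpos N x) (Nat.cast_nonneg _))
    by_contra! h_lt
    nlinarith [(Nat.cast_nonneg (G.dist (x : V) z) : (0 : ℝ) ≤ _)]
  refine ENNReal.tsum_le_of_sum_range_le fun N => ?_
  have h := ENNReal.ofReal_le_ofReal (h_trunc N)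
  simp only [truncatedGreen, Matrix.sum_apply, map_apply] at h
  rw [ENNReal.ofReal_natCast, ENNReal.ofReal_sum_of_nonneg fun _ _ => NNReal.coe_nonneg _] at h
  simpa only [ENNReal.ofReal_coe_nnreal] using h

theorem tendsto_killedWalk_pow (hpos : ∀ x, 0 < G.degree x) {x : B}
    (hx : killedGreen G B x x ≠ ⊤) (y : B) :
    Filter.Tendsto (fun n => (killedWalk G B ^ n) x y) Filter.atTop (nhds 0) := by
  have h_kernel : Filter.Tendsto (fun n => killedHeatKernel G B (2 * n) x x) Filter.atTop
      (nhds 0) := by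
    have h_summable : Summable fun n => killedHeatKernel G B n x x :=
      ENNReal.tsum_coe_ne_top_iff_summable.1 hx
    have h_even : Filter.Tendsto (fun n : ℕ => 2 * n) Filter.atTop Filter.atTop :=
      (strictMono_mul_left_of_pos two_pos).tendsto_atTop
    exact (NNReal.tendsto_atTop_zero_of_summable h_summable).comp h_even
  have h_le (n : ℕ) : (killedWalk G B ^ n) x y ≤
      NNReal.sqrt (G.degree (y : V) * killedHeatKernel G B (2 * n) x x) := by
    have hy : (G.degree (y : V) : ℝ≥0) ≠ 0 := by exact_mod_cast (hpos y).ne'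
    rw [NNReal.le_sqrt_iff_sq_le, two_mul, killedHeatKernel_add]
    calc (killedWalk G B ^ n) x y ^ 2
        = G.degree (y : V) *
            ((killedWalk G B ^ n) x y * (killedWalk G B ^ n) x y * (G.degree (y : V) : ℝ≥0)⁻¹) := by
          field_simp
      _ ≤ _ := by
          gcongr
          exact Finset.single_le_sum (f := fun z : B => (killedWalk G B ^ n) x z *
            (killedWalk G B ^ n) x z * (G.degree (z : V) : ℝ≥0)⁻¹)
            (fun _ _ => zero_le) (Finset.mem_univ y)
  refine tendsto_of_tendsto_of_tendsto_of_le_of_le tendsto_const_nhds ?_ (fun _ => zero_le) h_le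
  simpa [Function.comp_def] using (NNReal.continuous_sqrt.tendsto _).comp (h_kernel.const_mul _)

theorem one_le_energy_mul_killedGreen (hpos : ∀ x, 0 < G.degree x) {x : B}
    (hx : killedGreen G B x x ≠ ⊤) {f : V → ℝ} (hf : ∀ y ∉ B, f y = 0) (hfx : f x = 1) :
    1 ≤ energy G f * killedGreen G B x x := by
  have h_bound (N : ℕ) : ENNReal.ofReal ((1 - ∑ y : B, (killedWalk G B ^ N) x y * f y) ^ 2) ≤
      energy G f * killedGreen G B x x := calc
    _ = ENNReal.ofReal
        ((truncatedGreen G B N x ⬝ᵥ dirichletLaplacian G B *ᵥ B.restrict f) ^ 2) := by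
      rw [truncatedGreen_dotProduct_dirichletLaplacian hpos]
      simp only [Finset.restrict, hfx]
    _ ≤ ENNReal.ofReal ((B.restrict f ⬝ᵥ dirichletLaplacian G B *ᵥ B.restrict f) *
          truncatedGreen G B N x x) := by
      rw [mul_comm]
      gcongr
      refine (sq_dirichletLaplacian_le _ _).trans ?_
      gcongr
      · exact dirichletLaplacian_nonneg _
      · exact truncatedGreen_energy_le hpos N x
    _ ≤ energy G f * killedGreen G B x x := by
      rw [energy_eq_ofReal_dirichletLaplacian hf, ENNReal.ofReal_mul (dirichletLaplacian_nonneg _)]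
      gcongr
      exact ofReal_truncatedGreen_le_killedGreen N x x
  have h_exit : Filter.Tendsto (fun N => ∑ y : B, ((killedWalk G B ^ N) x y : ℝ) * f y)
      Filter.atTop (nhds 0) := by
    simpa using tendsto_finsetSum Finset.univ fun y _ =>
      (NNReal.tendsto_coe.2 (tendsto_killedWalk_pow hpos hx y)).mul_const (f y)
  have h_lim := ENNReal.tendsto_ofReal ((h_exit.const_sub 1).pow 2)
  rw [sub_zero, one_pow, ENNReal.ofReal_one] at h_lim
  exact le_of_tendsto' h_lim h_bound

theorem effRes_le_killedGreen (hpos : ∀ x, 0 < G.degree x) (x : B) :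
    effRes G {(x : V)} (B : Set V)ᶜ ≤ killedGreen G B x x := by
  rcases eq_or_ne (killedGreen G B x x) ⊤ with hx | hx
  · exact hx ▸ le_top
  rw [effRes, ENNReal.inv_le_iff_inv_le]
  refine le_iInf₂ fun f hf => ?_
  obtain ⟨hf_top, hfx, hfB⟩ := hf
  rw [ENNReal.inv_le_iff_le_mul (fun h => absurd h hf_top) fun h => absurd h hx, mul_comm]
  exact one_le_energy_mul_killedGreen hpos hx (fun y hy => hfB y (by simpa using hy)) (hfx x rfl)

end GreenPotential

section Ball

variable {G : SimpleGraph V} [G.LocallyFinite]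

theorem finite_setOf_dist_le (hconn : G.Connected) (o : V) (r : ℕ) :
    {x | G.dist o x ≤ r}.Finite := by
  induction r with
  | zero => simp [hconn.dist_eq_zero_iff]
  | succ r ih =>
    refine (ih.union (ih.biUnion fun x _ => (G.neighborSet x).toFinite)).subset fun x hx => ?_
    obtain ⟨p, hp⟩ := hconn.exists_walk_length_eq_dist x o
    cases p with
    | nil => left; simp
    | cons h_adj p =>
      have h_dist := (SimpleGraph.dist_comm ..).trans_le (SimpleGraph.dist_le p)
      have hx' : G.dist o x ≤ r + 1 := hx
      rw [SimpleGraph.Walk.length_cons, SimpleGraph.dist_comm] at hp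
      exact .inr (Set.mem_biUnion (show G.dist o _ ≤ r by omega) h_adj.symm)

theorem countable_of_connected (hconn : G.Connected) : Countable V := by
  obtain ⟨o⟩ := hconn.nonempty
  have h_cover : (⋃ r, {x | G.dist o x ≤ r}) = Set.univ :=
    Set.iUnion_eq_univ_iff.2 fun x => ⟨G.dist o x, le_refl (G.dist o x)⟩
  rw [← Set.countable_univ_iff, ← h_cover]
  exact Set.countable_iUnion fun r => (finite_setOf_dist_le hconn o r).countable

theorem exists_dist_eq_add_one [Infinite V] (hconn : G.Connected) (o : V) (r : ℕ) :
    ∃ z, G.dist o z = r + 1 := by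
  obtain ⟨y, hy⟩ := (finite_setOf_dist_le hconn o r).exists_notMem
  obtain ⟨p⟩ := hconn.preconnected o y
  obtain ⟨d, -, h_fst, h_snd⟩ := p.exists_boundary_dart {x | G.dist o x ≤ r} (by simp) hy
  have h_tri := hconn.dist_triangle (u := o) (v := d.fst) (w := d.snd)
  rw [SimpleGraph.dist_eq_one_iff_adj.2 d.adj] at h_tri
  simp only [Set.mem_ofPred_eq] at h_fst h_snd
  exact ⟨d.snd, by omega⟩

end Ball

section KilledCollisionEvent

open scoped NNReal

/-- The event that two walks are both at `x` at time `n` and have stayed in `B` until then. -/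
def killedCollisionEventAt (B : Finset V) (n : ℕ) (x : B) : Set (ℕ → V × V) :=
  survivalEvent (Prod.map Subtype.val Subtype.val : B × B → V × V) n (x, x)

/-- The event that two walks collide at time `n` and have stayed in `B` until then. -/
def killedCollisionEvent (B : Finset V) (n : ℕ) : Set (ℕ → V × V) :=
  ⋃ x, killedCollisionEventAt B n x

theorem indicator_killedCollisionEvent_le (B : Finset V) (n : ℕ) (ω : ℕ → V × V) :
    (killedCollisionEvent B n).indicator (1 : (ℕ → V × V) → ℝ≥0∞) ω ≤
      if (ω n).1 = (ω n).2 then 1 else 0 := by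
  refine Set.indicator_apply_le' (fun hω => ?_) fun _ => zero_le
  obtain ⟨x, -, hx⟩ := Set.mem_iUnion.1 hω
  simp [hx]

variable [MeasurableSpace V] [MeasurableSingletonClass V] [Countable V]

theorem measurableSet_killedCollisionEventAt (B : Finset V) (n : ℕ) (x : B) :
    MeasurableSet (killedCollisionEventAt B n x) :=
  measurableSet_survivalEvent _ _ _

theorem measurableSet_killedCollisionEvent (B : Finset V) (n : ℕ) :
    MeasurableSet (killedCollisionEvent B n) :=
  .iUnion fun x => measurableSet_killedCollisionEventAt B n x

theorem measure_killedCollisionEvent_inter_eq_sum (B : Finset V) (n : ℕ) (ν : Measure (ℕ → V × V))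
    {A : Set (ℕ → V × V)} (hA : MeasurableSet A) :
    ν (killedCollisionEvent B n ∩ A) = ∑ x : B, ν (killedCollisionEventAt B n x ∩ A) := by
  rw [killedCollisionEvent, Set.iUnion_inter, ← tsum_fintype (L := .unconditional B)]
  refine measure_iUnion (fun x y hxy => ?_)
    fun x => (measurableSet_killedCollisionEventAt B n x).inter hA
  exact (disjoint_survivalEvent (Subtype.val_injective.prodMap Subtype.val_injective) n
    fun h => hxy (congrArg Prod.fst h)).mono Set.inter_subset_left Set.inter_subset_left

variable {G : SimpleGraph V} [G.LocallyFinite] {B : Finset V} {ν : Measure (ℕ → V × V)}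

theorem IsSRWPairLaw.measure_killedCollisionEventAt {x : B} (hν : IsSRWPairLaw G x x ν) (n : ℕ)
    (y : B) : ν (killedCollisionEventAt B n y) = ((killedWalk G B ^ n) x y : ℝ≥0∞) ^ 2 := by
  have := hν.1
  rw [killedCollisionEventAt, hν.isMarkovLaw.measure_survivalEvent
    (Subtype.val_injective.prodMap Subtype.val_injective) (s := (x, x)) hν.measure_start, sq]
  exact pair_srwStep_pow G B n x x y y

theorem IsSRWPairLaw.measure_killedCollisionEvent {x : B} (hν : IsSRWPairLaw G x x ν) (n : ℕ) :
    ν (killedCollisionEvent B n) = killedCollision G B n x := by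
  rw [← Set.inter_univ (killedCollisionEvent B n),
    measure_killedCollisionEvent_inter_eq_sum B n ν .univ]
  simp [killedCollision, hν.measure_killedCollisionEventAt]

theorem IsSRWPairLaw.measure_killedCollisionEventAt_inter {a b : V} (hν : IsSRWPairLaw G a b ν)
    (m k : ℕ) (x y : B) :
    ν (killedCollisionEventAt B m x ∩ killedCollisionEventAt B (m + k) y) =
      ν (killedCollisionEventAt B m x) * ((killedWalk G B ^ k) x y : ℝ≥0∞) ^ 2 := by
  rw [sq, ← pair_srwStep_pow]
  exact hν.isMarkovLaw.measure_survivalEvent_inter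
    (Subtype.val_injective.prodMap Subtype.val_injective) m k (x, x) (y, y)

theorem IsSRWPairLaw.measure_killedCollisionEvent_inter {a b : V} (hν : IsSRWPairLaw G a b ν)
    (m k : ℕ) :
    ν (killedCollisionEvent B m ∩ killedCollisionEvent B (m + k)) =
      ∑ x : B, ν (killedCollisionEventAt B m x) * killedCollision G B k x := by
  rw [measure_killedCollisionEvent_inter_eq_sum B m ν (measurableSet_killedCollisionEvent B _)]
  refine Finset.sum_congr rfl fun x _ => ?_
  rw [Set.inter_comm, measure_killedCollisionEvent_inter_eq_sum B _ ν
    (measurableSet_killedCollisionEventAt B m x)]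
  simp only [Set.inter_comm (killedCollisionEventAt B (m + k) _),
    hν.measure_killedCollisionEventAt_inter, ← Finset.mul_sum, killedCollision,
    ENNReal.ofNNReal_finsetSum, ENNReal.coe_pow]

theorem IsSRWPairLaw.tsum_measure_killedCollisionEvent_inter_le {a b : V}
    (hν : IsSRWPairLaw G a b ν) (m : ℕ) {K : ℝ≥0∞}
    (hK : ∀ x, ∑' k, (killedCollision G B k x : ℝ≥0∞) ≤ K) :
    ∑' k, ν (killedCollisionEvent B m ∩ killedCollisionEvent B (m + k)) ≤
      K * ν (killedCollisionEvent B m) := calc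
  _ = ∑ x, ν (killedCollisionEventAt B m x) * ∑' k, (killedCollision G B k x : ℝ≥0∞) := by
    simp only [hν.measure_killedCollisionEvent_inter, ← ENNReal.tsum_mul_left]
    exact Summable.tsum_finsetSum fun _ _ => ENNReal.summable
  _ ≤ ∑ x, ν (killedCollisionEventAt B m x) * K := by gcongr with x; exact hK x
  _ = K * ν (killedCollisionEvent B m) := by
    rw [← Finset.sum_mul, mul_comm, ← Set.inter_univ (killedCollisionEvent B m),
      measure_killedCollisionEvent_inter_eq_sum B m ν .univ]
    simp only [Set.inter_univ]

end KilledCollisionEvent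

section Collisions

variable [MeasurableSpace V] [MeasurableSingletonClass V] {G : SimpleGraph V} [G.LocallyFinite]
  {ν : Measure (ℕ → V × V)}

theorem IsSRWPairLaw.effRes_compl_le_mul_measure_lt {o : V} (hν : IsSRWPairLaw G o o ν)
    (hconn : G.Connected) (hpos : ∀ x, 0 < G.degree x) {D : ℕ} (hD : ∀ x, G.degree x ≤ D)
    {B : Finset V} (ho : o ∈ B) {R : ℕ} (hR : ∀ x ∈ B, ∃ z ∉ B, G.dist x z ≤ R) :
    effRes G {o} (B : Set V)ᶜ ≤ 16 * D * R * ν {ω | effRes G {o} (B : Set V)ᶜ / 4 <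
      ∑' n : ℕ, if (ω n).1 = (ω n).2 then (1 : ℝ≥0∞) else 0} := by
  have := hν.1
  have := countable_of_connected hconn
  have hν' : IsSRWPairLaw G (⟨o, ho⟩ : B) (⟨o, ho⟩ : B) ν := hν
  have h_green (x : B) : killedGreen G B x x ≤ R := by
    obtain ⟨z, hz, hxz⟩ := hR x x.2
    exact (killedGreen_self_le_dist hconn hpos x hz).trans (by exact_mod_cast hxz)
  have h_collisions (x : B) : ∑' k, (killedCollision G B k x : ℝ≥0∞) ≤ D * R :=
    (tsum_killedCollision_le_mul_killedGreen G B hD hpos x).trans (by gcongr; exact h_green x)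
  have h_mean : ∑' n, ν (killedCollisionEvent B n) =
      ∑' n, (killedCollision G B n ⟨o, ho⟩ : ℝ≥0∞) :=
    tsum_congr fun n => hν'.measure_killedCollisionEvent n
  have h_top : ∑' n, ν (killedCollisionEvent B n) ≠ ⊤ := by
    rw [h_mean]
    exact ((h_collisions _).trans_lt (mul_lt_top (natCast_lt_top D) (natCast_lt_top R))).ne
  have h_res : effRes G {o} (B : Set V)ᶜ ≤ 2 * ∑' n, ν (killedCollisionEvent B n) := by
    rw [h_mean]
    exact (effRes_le_killedGreen hpos ⟨o, ho⟩).trans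
      (killedGreen_self_le_two_mul_tsum_killedCollision G B _)
  have h_second_moment := tsum_measure_le_mul_measure_half_lt ν
    (measurableSet_killedCollisionEvent B) h_top
    fun m => hν.tsum_measure_killedCollisionEvent_inter_le m h_collisions
  set M := ∑' n, ν (killedCollisionEvent B n)
  have h_quarter : effRes G {o} (B : Set V)ᶜ / 4 ≤ M / 2 := by
    refine ENNReal.div_le_of_le_mul (h_res.trans_eq ?_)
    rw [show (4 : ℝ≥0∞) = 2 * 2 by norm_num, ← mul_assoc,
      ENNReal.div_mul_cancel two_ne_zero ofNat_ne_top, mul_comm]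
  calc effRes G {o} (B : Set V)ᶜ
      ≤ 2 * M := h_res
    _ ≤ 2 * (8 * (D * R) * ν {ω | M / 2 <
          ∑' n, (killedCollisionEvent B n).indicator (1 : (ℕ → V × V) → ℝ≥0∞) ω}) := by gcongr
    _ = 16 * D * R * ν {ω | M / 2 <
          ∑' n, (killedCollisionEvent B n).indicator (1 : (ℕ → V × V) → ℝ≥0∞) ω} := by ring
    _ ≤ _ := by
      gcongr with ω n
      exact indicator_killedCollisionEvent_le B n ω

theorem IsSRWPairLaw.div_le_measure_mul_lt [Infinite V] {o : V} (hν : IsSRWPairLaw G o o ν)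
    (hconn : G.Connected) {D : ℕ} (hD : ∀ x, G.degree x ≤ D) {c : ℝ≥0∞} {r : ℕ} (hr : 0 < r)
    (hres : c * r ≤ effRes G {o} {x | G.dist o x ≤ r}ᶜ) :
    c / (48 * D) ≤
      ν {ω | c / 4 * r < ∑' n : ℕ, if (ω n).1 = (ω n).2 then (1 : ℝ≥0∞) else 0} := by
  set B : Finset V := (finite_setOf_dist_le hconn o r).toFinset
  have h_mem {x : V} : x ∈ B ↔ G.dist o x ≤ r := by simp [B]
  have h_coe : (B : Set V) = {x | G.dist o x ≤ r} := Set.Finite.coe_toFinset _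
  have h_exit (x : V) (hx : x ∈ B) : ∃ z ∉ B, G.dist x z ≤ 2 * r + 1 := by
    obtain ⟨z, hz⟩ := exists_dist_eq_add_one hconn o r
    have h_tri := hconn.dist_triangle (u := x) (v := o) (w := z)
    rw [SimpleGraph.dist_comm (u := x) (v := o)] at h_tri
    rw [h_mem] at hx
    exact ⟨z, by rw [h_mem]; omega, by omega⟩
  have h := hν.effRes_compl_le_mul_measure_lt hconn
    (fun x => hconn.preconnected.degree_pos_of_nontrivial x) hD (h_mem.2 (by simp)) h_exit
  rw [h_coe] at h
  refine ENNReal.div_le_of_le_mul ?_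
  have hr_ne : (r : ℝ≥0∞) ≠ 0 := Nat.cast_ne_zero.2 hr.ne'
  rw [← ENNReal.mul_le_mul_iff_left hr_ne (natCast_ne_top r)]
  calc c * r
      ≤ effRes G {o} {x | G.dist o x ≤ r}ᶜ := hres
    _ ≤ _ := h
    _ ≤ 16 * D * (3 * r) * ν {ω | c / 4 * r <
          ∑' n : ℕ, if (ω n).1 = (ω n).2 then (1 : ℝ≥0∞) else 0} := by
      gcongr
      · exact_mod_cast (by omega : 2 * r + 1 ≤ 3 * r)
      · rw [← ENNReal.mul_div_right_comm]
        gcongr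
    _ = _ := by ring

end Collisions

section InfiniteCollisions

theorem measurable_tsum_collisions [MeasurableSpace V] [MeasurableSingletonClass V] [Countable V] :
    Measurable fun ω : ℕ → V × V =>
      ∑' n, if (ω n).1 = (ω n).2 then (1 : ℝ≥0∞) else 0 :=
  .tsum fun n => .ite (measurableSet_eq_fun (measurable_pi_apply n).fst (measurable_pi_apply n).snd)
    measurable_const measurable_const

theorem infinite_collisions_from_resistance_general
    [MeasurableSpace V] [MeasurableSingletonClass V] [Infinite V]
    (G : SimpleGraph V) [G.LocallyFinite] (hconn : G.Connected)
    (o : V) (D : ℕ) (hdeg : ∀ x : V, G.degree x ≤ D)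
    (c : ℝ) (hc : 0 < c)
    (hres : ∃ᶠ r : ℕ in Filter.atTop,
      ENNReal.ofReal (c * r) ≤ effRes G {o} {x : V | G.dist o x ≤ r}ᶜ)
    (ν : Measure (ℕ → V × V)) (hν : IsSRWPairLaw G o o ν) :
    ENNReal.ofReal (c / (48 * D)) ≤
      ν {ω | (∑' n : ℕ, if (ω n).1 = (ω n).2 then (1 : ℝ≥0∞) else 0) = ⊤} := by
  have := hν.1
  have := countable_of_connected hconn
  have hD : 0 < D := (hconn.preconnected.degree_pos_of_nontrivial o).trans_le (hdeg o)
  rw [ENNReal.ofReal_div_of_pos (by positivity), ENNReal.ofReal_mul (by norm_num),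
    ENNReal.ofReal_ofNat, ENNReal.ofReal_natCast]
  have hδ : ENNReal.ofReal c / 4 ≠ 0 :=
    ENNReal.div_ne_zero.2 ⟨(ENNReal.ofReal_pos.2 hc).ne', ofNat_ne_top⟩
  have hδ_top : ENNReal.ofReal c / 4 ≠ ⊤ := ENNReal.div_ne_top ofReal_ne_top (by norm_num)
  refine le_measure_eq_top_of_frequently measurable_tsum_collisions hδ hδ_top ?_
  refine (hres.and_eventually (Filter.eventually_gt_atTop 0)).mono fun r ⟨hr_res, hr_pos⟩ => ?_
  rw [ENNReal.ofReal_mul hc.le, ENNReal.ofReal_natCast] at hr_res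
  exact hν.div_le_measure_mul_lt hconn hdeg hr_pos hr_res

end InfiniteCollisions

/-- Suppose every vertex of `G` has degree at most `6` and that
for some `ε > 0`, every graph-metric ball `B_r` (`r ≥ 1`) satisfies
`12εr ≤ R_eff(0, V∖B_r) ≤ r`.  Then two independent simple random walks on `G`,
both started at `0`, collide infinitely often with probability at least `ε²/12`. -/
theorem infinite_collisions_from_resistance
    [MeasurableSpace V] [MeasurableSingletonClass V]
    (G : SimpleGraph V) [G.LocallyFinite] (hconn : G.Connected) (hinf : Infinite V)
    (o : V) (hdeg : ∀ x : V, G.degree x ≤ 6)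
    (ε : ℝ) (hε : 0 < ε)
    (hres : ∀ r : ℕ, 1 ≤ r →
      ENNReal.ofReal (12 * ε * r) ≤ effRes G {o} {x : V | G.dist o x ≤ r}ᶜ ∧
        effRes G {o} {x : V | G.dist o x ≤ r}ᶜ ≤ (r : ℝ≥0∞))
    (ν : Measure (ℕ → V × V)) (hν : IsSRWPairLaw G o o ν) :
    ENNReal.ofReal (ε ^ 2 / 12) ≤
      ν {ω | (∑' n : ℕ, if (ω n).1 = (ω n).2 then (1 : ℝ≥0∞) else 0) = ⊤} := by
  have hε_le : 12 * ε ≤ 1 := by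
    simpa only [Nat.cast_one, mul_one, ENNReal.ofReal_le_one] using
      (hres 1 le_rfl).1.trans (hres 1 le_rfl).2
  have h_prob := infinite_collisions_from_resistance_general G hconn o 6 hdeg (12 * ε)
    (by positivity)
    ((Filter.eventually_ge_atTop 1).mono fun r hr => (hres r hr).1).frequently ν hν
  exact (ENNReal.ofReal_le_ofReal (by push_cast; nlinarith)).trans h_prob

end
end

section
/- Suppose in addition that every vertex of G has degree at most 6. Then the expected number of collisions of two independent simple random walks on G killed upon exiting B, both started at 0, satisfies the upper bound E_{0,0}(Z_B) ≤ 6 R_eff(0, V∖B). -/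
open MeasureTheory ENNReal
open scoped Classical

noncomputable section

variable {V : Type*}

/-- The cemetery-extended state space `B ∪ {†}` carries the discrete σ-algebra. -/
instance : MeasurableSpace (Option V) := ⊤

/-- One-step transition probabilities of the simple random walk on `G` killed
upon exiting `B`; the cemetery state `†` is `none`. -/
def killedStep (G : SimpleGraph V) [G.LocallyFinite] (B : Set V) :
    Option V → Option V → ℝ≥0∞
  | some x, some y =>
      if x ∈ B ∧ G.Adj x y ∧ y ∈ B then ((G.degree x : ℝ≥0∞))⁻¹ else 0
  | some x, none =>
      if x ∈ B then
        (((G.neighborFinset x).filter (fun y => y ∉ B)).card : ℝ≥0∞) / (G.degree x : ℝ≥0∞)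
      else 1
  | none, some _ => 0
  | none, none => 1

/-- Probability that the killed walk started at `a` follows `w` for its first `n` steps. -/
def killedCylProb (G : SimpleGraph V) [G.LocallyFinite] (B : Set V) (a : V)
    {n : ℕ} (w : Fin (n + 1) → Option V) : ℝ≥0∞ :=
  (if w 0 = some a then 1 else 0) *
    ∏ i : Fin n, killedStep G B (w i.castSucc) (w i.succ)

/-- `μ` is the law of the simple random walk on `G` killed upon exiting `B`, started at `a`:
it is a probability measure on trajectories with the correct finite-dimensional
distributions. -/
def IsKilledWalkLaw (G : SimpleGraph V) [G.LocallyFinite] (B : Set V)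
    (a : V) (μ : Measure (ℕ → Option V)) : Prop :=
  IsProbabilityMeasure μ ∧
    ∀ (n : ℕ) (w : Fin (n + 1) → Option V),
      μ {ω | ∀ i : Fin (n + 1), ω i = w i} = killedCylProb G B a w

/-- `ν` is the joint law of two independent killed walks started at `a` and `b`. -/
def IsKilledPairLaw (G : SimpleGraph V) [G.LocallyFinite] (B : Set V)
    (a b : V) (ν : Measure (ℕ → Option V × Option V)) : Prop :=
  IsProbabilityMeasure ν ∧
    ∀ (n : ℕ) (w : Fin (n + 1) → Option V × Option V),
      ν {ω | ∀ i : Fin (n + 1), ω i = w i} =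
        killedCylProb G B a (fun i => (w i).1) * killedCylProb G B b (fun i => (w i).2)

/-- The number of collisions `Z_B = Σ_{n ≥ 0} 1(Xₙ = Yₙ ∈ B)` of the two coordinate
walks along a trajectory. -/
def collisions (B : Set V) (ω : ℕ → Option V × Option V) : ℝ≥0∞ :=
  ∑' n : ℕ, if ∃ x ∈ B, (ω n).1 = some x ∧ (ω n).2 = some x then 1 else 0

/-!
Detailed balance `deg x · pₙ(x, y) = deg y · pₙ(y, x)` bounds `∑ₓ pₙ(o, x)²` by
`(D / deg o) p₂ₙ(o, o)`, where `D` bounds the degrees. Summing over `n`, the expected number of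
collisions is at most `D · g(o, o) / deg o`, with `g` the Green function of the killed walk.

The Green function truncated to `N` steps, `g_N(·, o)`, vanishes off `B` and satisfies
`-Δ g_N(·, o) ≤ deg o · δ_o`, so summation by parts bounds its energy by `deg o · g_N(o, o)`.
Normalised to be `1` at `o` it competes in the variational problem for the effective resistance,
whence `g_N(o, o) / deg o ≤ R_eff(o, V ∖ B)`. The truncation keeps the cross terms of the energy
finite, so that they can be cancelled in `ℝ≥0∞` even when `g` is infinite.
-/

section Kernel

variable {α : Type*} {k : α → α → ℝ≥0∞} {π : α → ℝ≥0∞}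

/-- The action `(k f)(x) = ∑ y, k x y * f y` of a nonnegative kernel on nonnegative functions. -/
def kernelOp (k : α → α → ℝ≥0∞) (f : α → ℝ≥0∞) (x : α) : ℝ≥0∞ := ∑' y, k x y * f y

/-- The `n`-step kernel `kⁿ(x, y)`, obtained by letting `k` act `n` times on the point mass
at `y`. -/
def kernelPow (k : α → α → ℝ≥0∞) (n : ℕ) (x y : α) : ℝ≥0∞ := (kernelOp k)^[n] (Pi.single y 1) x

/-- The Green function of `k`, the total mass `k` transports from `x` to `y` in any number
of steps. -/
def green (k : α → α → ℝ≥0∞) (x y : α) : ℝ≥0∞ := ∑' n, kernelPow k n x y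

/-- The Green function of `k` truncated to fewer than `N` steps. -/
def truncGreen (k : α → α → ℝ≥0∞) (N : ℕ) (x y : α) : ℝ≥0∞ :=
  ∑ n ∈ Finset.range N, kernelPow k n x y

/-- Detailed balance of the kernel `k` with respect to the weight `π`. -/
def IsReversible (π : α → ℝ≥0∞) (k : α → α → ℝ≥0∞) : Prop := ∀ x y, π x * k x y = π y * k y x

lemma tsum_mul_single (f : α → ℝ≥0∞) (x : α) :
    ∑' y, f y * (Pi.single x 1 : α → ℝ≥0∞) y = f x := by
  rw [tsum_eq_single x fun y hy => by simp [hy], Pi.single_eq_same, mul_one]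

lemma kernelPow_zero (x y : α) : kernelPow k 0 x y = (Pi.single y 1 : α → ℝ≥0∞) x := rfl

lemma kernelPow_succ (n : ℕ) (x y : α) :
    kernelPow k (n + 1) x y = kernelOp k (kernelPow k n · y) x :=
  congrFun (Function.iterate_succ_apply' (kernelOp k) n _) x

lemma iterate_kernelOp_eq_tsum (n : ℕ) (f : α → ℝ≥0∞) (x : α) :
    (kernelOp k)^[n] f x = ∑' y, kernelPow k n x y * f y := by
  induction n generalizing x with
  | zero =>
    simp_rw [kernelPow_zero, Pi.single_comm, mul_comm _ (f _), tsum_mul_single,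
      Function.iterate_zero_apply]
  | succ n ih =>
    simp_rw [Function.iterate_succ_apply', kernelPow_succ, kernelOp, ih,
      ← ENNReal.tsum_mul_left, ← ENNReal.tsum_mul_right]
    rw [ENNReal.tsum_comm]
    simp_rw [mul_assoc]

lemma kernelPow_add (m n : ℕ) (x y : α) :
    kernelPow k (m + n) x y = ∑' z, kernelPow k m x z * kernelPow k n z y := by
  rw [kernelPow, Function.iterate_add_apply, iterate_kernelOp_eq_tsum]
  rfl

lemma kernelPow_one (x y : α) : kernelPow k 1 x y = k x y := tsum_mul_single (k x) y

lemma tsum_kernelPow_le_one (hk : ∀ x, ∑' y, k x y ≤ 1) (n : ℕ) (x : α) :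
    ∑' y, kernelPow k n x y ≤ 1 := by
  induction n generalizing x with
  | zero => simp [kernelPow_zero, Pi.single_comm]
  | succ n ih =>
    calc ∑' y, kernelPow k (n + 1) x y = ∑' z, k x z * ∑' y, kernelPow k n z y := by
          simp_rw [kernelPow_succ, kernelOp, ← ENNReal.tsum_mul_left]
          exact ENNReal.tsum_comm
      _ ≤ ∑' z, k x z := ENNReal.tsum_le_tsum fun z => mul_le_of_le_one_right' (ih z)
      _ ≤ 1 := hk x

lemma truncGreen_le_natCast (hk : ∀ x, ∑' y, k x y ≤ 1) (N : ℕ) (x y : α) :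
    truncGreen k N x y ≤ N := by
  simpa [truncGreen] using Finset.sum_le_card_nsmul (Finset.range N) _ 1 fun n _ =>
    (ENNReal.le_tsum y).trans (tsum_kernelPow_le_one hk n x)

lemma truncGreen_le_single_add_kernelOp (N : ℕ) (x y : α) :
    truncGreen k N x y ≤ (Pi.single y 1 : α → ℝ≥0∞) x + kernelOp k (truncGreen k N · y) x :=
  calc truncGreen k N x y ≤ ∑ n ∈ Finset.range (N + 1), kernelPow k n x y :=
        Finset.sum_le_sum_of_subset (Finset.range_mono N.le_succ)
    _ = kernelPow k 0 x y + ∑ n ∈ Finset.range N, kernelPow k (n + 1) x y := by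
        rw [Finset.sum_range_succ', add_comm]
    _ = (Pi.single y 1 : α → ℝ≥0∞) x + kernelOp k (truncGreen k N · y) x := by
        simp_rw [kernelPow_zero, kernelPow_succ, kernelOp, truncGreen, Finset.mul_sum]
        rw [Summable.tsum_finsetSum fun _ _ => ENNReal.summable]

/-- A path sum is evaluated by integrating out the last vertex repeatedly. -/
lemma tsum_path_eq_tsum_iterate_kernelOp (n : ℕ) (f g : α → ℝ≥0∞) :
    ∑' w : Fin (n + 1) → α,
      f (w 0) * (∏ i : Fin n, k (w i.castSucc) (w i.succ)) * g (w (Fin.last n)) =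
      ∑' x, f x * (kernelOp k)^[n] g x := by
  induction n generalizing g with
  | zero =>
    rw [← (Equiv.funUnique (Fin 1) α).symm.tsum_eq]
    simp
  | succ n ih =>
    rw [← (Fin.snocEquiv fun _ : Fin (n + 2) => α).tsum_eq, ENNReal.tsum_prod',
      ENNReal.tsum_comm, Function.iterate_succ_apply, ← ih (kernelOp k g)]
    refine tsum_congr fun w => ?_
    rw [kernelOp, ← ENNReal.tsum_mul_left]
    refine tsum_congr fun z => ?_
    have snoc_zero : (Fin.snoc w z : Fin (n + 2) → α) 0 = w 0 :=
      Fin.snoc_castSucc (α := fun _ => α) z w 0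
    simp only [Fin.snocEquiv_apply, Fin.prod_univ_castSucc, Fin.succ_castSucc, Fin.succ_last,
      Fin.snoc_castSucc (α := fun _ => α), Fin.snoc_last, snoc_zero, mul_assoc]

namespace IsReversible

protected lemma kernelPow (h : IsReversible π k) (n : ℕ) : IsReversible π (kernelPow k n) := by
  intro x y
  induction n generalizing x y with
  | zero =>
    rcases eq_or_ne x y with rfl | hxy
    · rfl
    · simp [kernelPow_zero, hxy, hxy.symm]
  | succ n ih =>
    rw [kernelPow_add n 1 y, add_comm n 1, kernelPow_add, ← ENNReal.tsum_mul_left,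
      ← ENNReal.tsum_mul_left]
    refine tsum_congr fun z => ?_
    rw [kernelPow_one, kernelPow_one, ← mul_assoc, h x z, mul_right_comm, ih z y, mul_assoc]

lemma mul_tsum_kernelPow_sq_le (h : IsReversible π k) {D : ℝ≥0∞} (hD : ∀ x, π x ≤ D) (n : ℕ)
    (o : α) :
    π o * ∑' x, kernelPow k n o x ^ 2 ≤ D * kernelPow k (2 * n) o o := by
  rw [two_mul, kernelPow_add, ← ENNReal.tsum_mul_left, ← ENNReal.tsum_mul_left]
  refine ENNReal.tsum_le_tsum fun x => ?_
  rw [sq, ← mul_assoc, h.kernelPow n o x, mul_right_comm, mul_assoc]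
  gcongr
  exact hD x

lemma mul_tsum_tsum_kernelPow_sq_le (h : IsReversible π k) {D : ℝ≥0∞} (hD : ∀ x, π x ≤ D)
    (o : α) :
    π o * ∑' n, ∑' x, kernelPow k n o x ^ 2 ≤ D * green k o o := by
  rw [← ENNReal.tsum_mul_left]
  calc _ ≤ ∑' n, D * kernelPow k (2 * n) o o :=
        ENNReal.tsum_le_tsum fun n => h.mul_tsum_kernelPow_sq_le hD n o
    _ = D * ∑' n, kernelPow k (2 * n) o o := ENNReal.tsum_mul_left
    _ ≤ D * green k o o := by
        gcongr
        exact ENNReal.tsum_comp_le_tsum_of_injective (mul_right_injective₀ two_ne_zero)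
          (kernelPow k · o o)

lemma tsum_mul_truncGreen_le (h : IsReversible π k) (hk : ∀ x, ∑' y, k x y ≤ 1) (N : ℕ)
    (o : α) : ∑' x, π x * truncGreen k N x o ≤ N * π o := by
  calc ∑' x, π x * truncGreen k N x o
      = ∑ n ∈ Finset.range N, π o * ∑' x, kernelPow k n o x := by
        simp_rw [truncGreen, Finset.mul_sum, h.kernelPow _ _ o]
        rw [Summable.tsum_finsetSum fun _ _ => ENNReal.summable]
        simp_rw [ENNReal.tsum_mul_left]
    _ ≤ ∑ _n ∈ Finset.range N, π o := Finset.sum_le_sum fun n _ =>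
        mul_le_of_le_one_right' (tsum_kernelPow_le_one hk n o)
    _ = N * π o := by simp

lemma tsum_mul_truncGreen_sq_ne_top (h : IsReversible π k) (hk : ∀ x, ∑' y, k x y ≤ 1) (N : ℕ)
    {o : α} (ho : π o ≠ ⊤) : ∑' x, π x * truncGreen k N x o ^ 2 ≠ ⊤ := by
  refine ne_top_of_le_ne_top (ENNReal.mul_ne_top
    (ENNReal.mul_ne_top (ENNReal.natCast_ne_top N) ho) (ENNReal.natCast_ne_top N)) ?_
  calc ∑' x, π x * truncGreen k N x o ^ 2
      ≤ ∑' x, π x * truncGreen k N x o * N := ENNReal.tsum_le_tsum fun x => by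
        rw [sq, ← mul_assoc]
        gcongr
        exact truncGreen_le_natCast hk N x o
    _ = (∑' x, π x * truncGreen k N x o) * N := ENNReal.tsum_mul_right
    _ ≤ N * π o * N := by
        gcongr
        exact h.tsum_mul_truncGreen_le hk N o

end IsReversible

end Kernel

section Energy

open NNReal

variable (G : SimpleGraph V)

lemma energy_const_mul (c : ℝ) (f : V → ℝ) :
    energy G (fun x => c * f x) = ENNReal.ofReal (c ^ 2) * energy G f := by
  simp_rw [energy, ← mul_sub, mul_pow, ENNReal.ofReal_mul (sq_nonneg c)]
  rw [mul_left_comm, ← ENNReal.tsum_mul_left (a := ENNReal.ofReal (c ^ 2))]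
  simp_rw [mul_ite, mul_zero]

lemma sq_div_energy_le_effRes {A₁ A₂ : Set V} {f : V → ℝ} {c : ℝ} (hf : energy G f ≠ ⊤)
    (h₁ : ∀ x ∈ A₁, f x = c) (h₂ : ∀ x ∈ A₂, f x = 0) :
    ENNReal.ofReal (c ^ 2) / energy G f ≤ effRes G A₁ A₂ := by
  rcases eq_or_ne c 0 with rfl | hc
  · simp
  have hscale : energy G (fun x => c⁻¹ * f x) = (ENNReal.ofReal (c ^ 2) / energy G f)⁻¹ := by
    rw [energy_const_mul, inv_pow, ENNReal.ofReal_inv_of_pos (by positivity),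
      ENNReal.inv_div (.inl hf) (.inr (by positivity)), ENNReal.div_eq_inv_mul]
  rw [effRes, ENNReal.le_inv_iff_le_inv, ← hscale]
  refine iInf₂_le _ ⟨?_, fun x hx => ?_, fun x hx => ?_⟩
  · rw [energy_const_mul]
    finiteness
  · simp only [h₁ x hx, inv_mul_cancel₀ hc]
  · simp only [h₂ x hx, mul_zero]

variable [G.LocallyFinite]

lemma tsum_adj_const (x : V) (c : ℝ≥0∞) :
    ∑' y, (if G.Adj x y then c else 0) = G.degree x * c := by
  rw [tsum_eq_sum (s := G.neighborFinset x) fun y hy => by simp_all,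
    Finset.sum_congr rfl fun y hy => if_pos ((G.mem_neighborFinset x y).1 hy), Finset.sum_const,
    G.card_neighborFinset_eq_degree, nsmul_eq_mul]

lemma tsum_adj_fst (g : V → ℝ≥0∞) :
    ∑' p : V × V, (if G.Adj p.1 p.2 then g p.1 else 0) = ∑' x, G.degree x * g x := by
  simp_rw [ENNReal.tsum_prod', tsum_adj_const]

lemma tsum_adj_snd (g : V → ℝ≥0∞) :
    ∑' p : V × V, (if G.Adj p.1 p.2 then g p.2 else 0) = ∑' x, G.degree x * g x := by
  rw [← tsum_adj_fst, ← (Equiv.prodComm V V).tsum_eq]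
  simp [G.adj_comm]

/-- The cross term of `(f x - f y)²` stands on the left so that no subtraction occurs. -/
lemma energy_add_tsum_adj_mul (f : V → ℝ≥0) :
    energy G (fun x => f x) + ∑' p : V × V, (if G.Adj p.1 p.2 then (f p.1 * f p.2 : ℝ≥0∞) else 0)
      = ∑' x, G.degree x * (f x : ℝ≥0∞) ^ 2 := by
  have sq_sub_add (a b : ℝ≥0) : ENNReal.ofReal (((a : ℝ) - b) ^ 2) + 2 * (a * b : ℝ≥0∞) =
      (a : ℝ≥0∞) ^ 2 + (b : ℝ≥0∞) ^ 2 := by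
    rw [← ENNReal.toReal_eq_toReal_iff' (by finiteness) (by finiteness),
      ENNReal.toReal_add (by finiteness) (by finiteness),
      ENNReal.toReal_add (by finiteness) (by finiteness), ENNReal.toReal_ofReal (sq_nonneg _)]
    simp only [ENNReal.toReal_mul, ENNReal.toReal_pow, ENNReal.coe_toReal, ENNReal.toReal_ofNat]
    ring
  have two_mul_half : (2 : ℝ≥0∞) * (1 / 2) = 1 := ENNReal.mul_div_cancel two_ne_zero ofNat_ne_top
  refine (ENNReal.mul_right_inj two_ne_zero ofNat_ne_top).1 ?_
  rw [energy, mul_add, ← mul_assoc, two_mul_half, one_mul, ← ENNReal.tsum_mul_left,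
    ← ENNReal.tsum_add, two_mul]
  nth_rw 1 [← tsum_adj_fst G fun x => (f x : ℝ≥0∞) ^ 2]
  rw [← tsum_adj_snd G fun x => (f x : ℝ≥0∞) ^ 2, ← ENNReal.tsum_add]
  refine tsum_congr fun p => ?_
  split_ifs
  · exact sq_sub_add _ _
  · simp

/-- Summation by parts: `ℰ(f, f) = ⟨f, -Δf⟩ ≤ ⟨f, g⟩` whenever `-Δf ≤ g`. -/
lemma energy_le_tsum_mul {f : V → ℝ≥0} {g : V → ℝ≥0∞}
    (hf : ∀ x, G.degree x * (f x : ℝ≥0∞) ≤ g x + ∑' y, if G.Adj x y then (f y : ℝ≥0∞) else 0)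
    (hfin : ∑' x, G.degree x * (f x : ℝ≥0∞) ^ 2 ≠ ⊤) :
    energy G (fun x => f x) ≤ ∑' x, g x * f x := by
  have parts := energy_add_tsum_adj_mul G f
  refine ENNReal.le_of_add_le_add_right
    (ne_top_of_le_ne_top hfin (le_add_self.trans parts.le)) ?_
  rw [parts, ENNReal.tsum_prod', ← ENNReal.tsum_add]
  refine ENNReal.tsum_le_tsum fun x => ?_
  calc G.degree x * (f x : ℝ≥0∞) ^ 2
      ≤ (g x + ∑' y, if G.Adj x y then (f y : ℝ≥0∞) else 0) * f x := by
        rw [sq, ← mul_assoc]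
        gcongr
        exact hf x
    _ = g x * f x + ∑' y, if G.Adj x y then (f x * f y : ℝ≥0∞) else 0 := by
        rw [add_mul, ← ENNReal.tsum_mul_right]
        simp_rw [ite_mul, zero_mul, mul_comm]

end Energy

section KilledKernel

/-- The transition kernel of the killed walk between vertices. Leaving out the cemetery makes it
reversible, at the price of being only sub-Markov. -/
def killedKernel (G : SimpleGraph V) [G.LocallyFinite] (B : Set V) (x y : V) : ℝ≥0∞ :=
  killedStep G B (some x) (some y)

variable (G : SimpleGraph V) [G.LocallyFinite] (B : Set V)

lemma degree_mul_killedKernel (x y : V) :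
    G.degree x * killedKernel G B x y = if x ∈ B ∧ G.Adj x y ∧ y ∈ B then 1 else 0 := by
  rw [killedKernel, killedStep, mul_ite, mul_zero]
  refine if_ctx_congr .rfl (fun h => ENNReal.mul_inv_cancel ?_ (natCast_ne_top _)) fun _ => rfl
  exact_mod_cast ((G.degree_pos_iff_exists_adj x).2 ⟨y, h.2.1⟩).ne'

lemma isReversible_killedKernel : IsReversible (fun x => G.degree x) (killedKernel G B) := by
  intro x y
  simp only [degree_mul_killedKernel, G.adj_comm x y]
  exact if_congr (by tauto) rfl rfl

lemma tsum_killedKernel_le_one (x : V) : ∑' y, killedKernel G B x y ≤ 1 :=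
  calc ∑' y, killedKernel G B x y
      ≤ ∑' y, if G.Adj x y then (G.degree x : ℝ≥0∞)⁻¹ else 0 :=
        ENNReal.tsum_le_tsum fun y => by
          rw [killedKernel, killedStep]
          split_ifs <;> simp_all
    _ = G.degree x * (G.degree x : ℝ≥0∞)⁻¹ :=
        tsum_adj_const G x _
    _ ≤ 1 := ENNReal.mul_inv_le_one _

lemma degree_mul_kernelOp_killedKernel_le (f : V → ℝ≥0∞) (x : V) :
    G.degree x * kernelOp (killedKernel G B) f x ≤ ∑' y, if G.Adj x y then f y else 0 := by
  rw [kernelOp, ← ENNReal.tsum_mul_left]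
  refine ENNReal.tsum_le_tsum fun y => ?_
  rw [← mul_assoc, degree_mul_killedKernel]
  split_ifs <;> simp_all

lemma truncGreen_killedKernel_ne_top (N : ℕ) (x y : V) :
    truncGreen (killedKernel G B) N x y ≠ ⊤ :=
  ne_top_of_le_ne_top (natCast_ne_top N)
    (truncGreen_le_natCast (tsum_killedKernel_le_one G B) N x y)

lemma energy_truncGreen_le (N : ℕ) (o : V) :
    energy G (fun x => (truncGreen (killedKernel G B) N x o).toReal) ≤
      G.degree o * truncGreen (killedKernel G B) N o o := by
  set u : V → ℝ≥0∞ := (truncGreen (killedKernel G B) N · o)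
  have coe_u x : ((u x).toNNReal : ℝ≥0∞) = u x :=
    ENNReal.coe_toNNReal (truncGreen_killedKernel_ne_top G B N x o)
  have laplacian_le (x : V) : G.degree x * u x ≤
      G.degree x * (Pi.single o 1 : V → ℝ≥0∞) x + ∑' y, if G.Adj x y then u y else 0 :=
    calc G.degree x * u x
        ≤ G.degree x * ((Pi.single o 1 : V → ℝ≥0∞) x + kernelOp (killedKernel G B) u x) := by
          gcongr
          exact truncGreen_le_single_add_kernelOp N x o
      _ ≤ _ := by
          rw [mul_add]
          gcongr
          exact degree_mul_kernelOp_killedKernel_le G B u x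
  have tsum_sq_ne_top : ∑' x, G.degree x * u x ^ 2 ≠ ⊤ :=
    (isReversible_killedKernel G B).tsum_mul_truncGreen_sq_ne_top
      (tsum_killedKernel_le_one G B) N (natCast_ne_top _)
  calc energy G (fun x => (u x).toNNReal)
      ≤ ∑' x, G.degree x * (Pi.single o 1 : V → ℝ≥0∞) x * (u x).toNNReal :=
        energy_le_tsum_mul G (by simpa only [coe_u] using laplacian_le)
          (by simpa only [coe_u] using tsum_sq_ne_top)
    _ = G.degree o * u o := by
        simp_rw [coe_u, mul_right_comm]
        exact tsum_mul_single (fun x => G.degree x * u x) o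

variable {G B}

lemma kernelPow_killedKernel_eq_zero {x y : V} (hx : x ∉ B) (hy : y ∈ B) (n : ℕ) :
    kernelPow (killedKernel G B) n x y = 0 := by
  cases n with
  | zero => exact Pi.single_eq_of_ne (ne_of_mem_of_not_mem hy hx).symm _
  | succ n => simp [kernelPow_succ, kernelOp, killedKernel, killedStep, hx]

lemma truncGreen_div_degree_le_effRes {o : V} (hoB : o ∈ B) (N : ℕ) :
    truncGreen (killedKernel G B) N o o / G.degree o ≤ effRes G {o} Bᶜ := by
  set u : V → ℝ≥0∞ := (truncGreen (killedKernel G B) N · o) with hu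
  have u_ne_top : u o ≠ ⊤ := truncGreen_killedKernel_ne_top G B N o o
  have energy_le : energy G (fun x => (u x).toReal) ≤ G.degree o * u o :=
    energy_truncGreen_le G B N o
  calc u o / G.degree o ≤ u o ^ 2 / (G.degree o * u o) := by
        rcases eq_or_ne (u o) 0 with h0 | h0
        · simp [h0]
        · rw [sq, ENNReal.mul_div_mul_right _ _ h0 u_ne_top]
    _ ≤ ENNReal.ofReal ((u o).toReal ^ 2) / energy G (fun x => (u x).toReal) := by
        rw [ENNReal.ofReal_pow toReal_nonneg, ENNReal.ofReal_toReal u_ne_top]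
        gcongr
    _ ≤ effRes G {o} Bᶜ := by
        refine sq_div_energy_le_effRes G (ne_top_of_le_ne_top ?_ energy_le) ?_ fun x hx => ?_
        · exact ENNReal.mul_ne_top (natCast_ne_top _) u_ne_top
        · rintro x rfl
          rfl
        · simp [hu, truncGreen, kernelPow_killedKernel_eq_zero hx hoB]

lemma green_div_degree_le_effRes {o : V} (hoB : o ∈ B) :
    green (killedKernel G B) o o / G.degree o ≤ effRes G {o} Bᶜ := by
  rw [green, div_eq_mul_inv, ← ENNReal.tsum_mul_right]
  refine ENNReal.tsum_le_of_sum_range_le fun N => ?_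
  rw [← Finset.sum_mul, ← div_eq_mul_inv]
  exact truncGreen_div_degree_le_effRes hoB N

end KilledKernel

section Collisions

instance : DiscreteMeasurableSpace (Option V) := ⟨fun _ => trivial⟩

/-- The extension of a function on vertices by the value `0` at the cemetery. -/
def extendByZero (f : V → ℝ≥0∞) (s : Option V) : ℝ≥0∞ := s.elim 0 f

variable {G : SimpleGraph V} [G.LocallyFinite] {B : Set V}

lemma semiconj_extendByZero :
    Function.Semiconj extendByZero (kernelOp (killedKernel G B)) (kernelOp (killedStep G B)) := by
  intro f
  funext s
  rw [kernelOp, ← (Option.some_injective V).tsum_eq]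
  · cases s <;> simp [extendByZero, kernelOp, killedKernel, killedStep]
  · rintro (_ | x) hx
    · simp [extendByZero] at hx
    · exact ⟨x, rfl⟩

lemma iterate_kernelOp_killedStep_extendByZero_single (n : ℕ) (x y : V) :
    (kernelOp (killedStep G B))^[n] (extendByZero (Pi.single y 1)) (some x) =
      kernelPow (killedKernel G B) n x y :=
  congrFun (semiconj_extendByZero.iterate_right n (Pi.single y 1)).symm (some x)

lemma tsum_killedCylProb_mul (a : V) (n : ℕ) (g : Option V → ℝ≥0∞) :
    ∑' w : Fin (n + 1) → Option V, killedCylProb G B a w * g (w (Fin.last n)) =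
      (kernelOp (killedStep G B))^[n] g (some a) := by
  simp_rw [killedCylProb]
  rw [tsum_path_eq_tsum_iterate_kernelOp n (fun s => if s = some a then 1 else 0) g]
  simp

lemma IsKilledPairLaw.lintegral_mul [Countable V] {a b : V}
    {ν : Measure (ℕ → Option V × Option V)} (hν : IsKilledPairLaw G B a b ν) (n : ℕ)
    (g h : Option V → ℝ≥0∞) :
    ∫⁻ ω, g (ω n).1 * h (ω n).2 ∂ν =
      (kernelOp (killedStep G B))^[n] g (some a) * (kernelOp (killedStep G B))^[n] h (some b) := by
  let firstSteps (ω : ℕ → Option V × Option V) (i : Fin (n + 1)) : Option V × Option V := ω i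
  have measurable_firstSteps : Measurable firstSteps := by fun_prop
  have map_firstSteps (w : Fin (n + 1) → Option V × Option V) : ν.map firstSteps {w} =
      killedCylProb G B a (fun i => (w i).1) * killedCylProb G B b (fun i => (w i).2) := by
    rw [Measure.map_apply measurable_firstSteps (measurableSet_singleton w), ← hν.2 n w]
    congr 1
    ext ω
    exact funext_iff
  calc ∫⁻ ω, g (ω n).1 * h (ω n).2 ∂ν
      = ∫⁻ w, g (w (Fin.last n)).1 * h (w (Fin.last n)).2 ∂ν.map firstSteps := by
        rw [lintegral_map .of_discrete measurable_firstSteps]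
        simp [firstSteps]
    _ = ∑' (w : Fin (n + 1) → Option V) (w' : Fin (n + 1) → Option V),
          (killedCylProb G B a w * g (w (Fin.last n))) *
            (killedCylProb G B b w' * h (w' (Fin.last n))) := by
        rw [lintegral_countable', ← ENNReal.tsum_prod,
          ← (Equiv.arrowProdEquivProdArrow _ _ _).symm.tsum_eq]
        refine tsum_congr fun p => ?_
        rw [map_firstSteps, mul_comm, mul_mul_mul_comm]
        rfl
    _ = _ := by
        simp_rw [ENNReal.tsum_mul_left, ENNReal.tsum_mul_right, tsum_killedCylProb_mul]

lemma collisions_le_tsum (B : Set V) (ω : ℕ → Option V × Option V) :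
    collisions B ω ≤ ∑' (n) (x : V),
      extendByZero (Pi.single x 1) (ω n).1 * extendByZero (Pi.single x 1) (ω n).2 := by
  refine ENNReal.tsum_le_tsum fun n => ?_
  split_ifs with hcoll
  · obtain ⟨x, -, hX, hY⟩ := hcoll
    refine le_trans ?_ (ENNReal.le_tsum x)
    simp [hX, hY, extendByZero]
  · exact zero_le

lemma IsKilledPairLaw.lintegral_collisions_le [Countable V] {a b : V}
    {ν : Measure (ℕ → Option V × Option V)} (hν : IsKilledPairLaw G B a b ν) :
    ∫⁻ ω, collisions B ω ∂ν ≤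
      ∑' (n) (x : V), kernelPow (killedKernel G B) n a x * kernelPow (killedKernel G B) n b x := by
  refine (lintegral_mono (collisions_le_tsum B)).trans_eq ?_
  have hmeas (n : ℕ) (x : V) : Measurable fun ω : ℕ → Option V × Option V =>
      extendByZero (Pi.single x 1) (ω n).1 * extendByZero (Pi.single x 1) (ω n).2 :=
    (Measurable.of_discrete (f := fun p : Option V × Option V =>
      extendByZero (Pi.single x 1) p.1 * extendByZero (Pi.single x 1) p.2)).comp
      (measurable_pi_apply n)
  rw [lintegral_tsum fun n => (Measurable.tsum (hmeas n)).aemeasurable]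
  refine tsum_congr fun n => ?_
  rw [lintegral_tsum fun x => (hmeas n x).aemeasurable]
  simp_rw [hν.lintegral_mul, iterate_kernelOp_killedStep_extendByZero_single]

end Collisions

lemma countable_of_connected_of_locallyFinite (G : SimpleGraph V) [G.LocallyFinite]
    (hconn : G.Connected) : Countable V := by
  obtain ⟨o⟩ := hconn.nonempty
  have finite_sphere (n : ℕ) : {v | ∃ p : G.Walk v o, p.length = n}.Finite := by
    induction n with
    | zero =>
      refine (Set.finite_singleton o).subset ?_
      rintro v ⟨p, hp⟩
      exact p.eq_of_length_eq_zero hp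
    | succ n ih =>
      refine (ih.biUnion fun x _ => (G.neighborFinset x).finite_toSet).subset ?_
      rintro v ⟨_ | ⟨hadj, p⟩, hp⟩
      · simp at hp
      · exact Set.mem_biUnion ⟨p, Nat.succ_injective hp⟩ (by simpa using hadj.symm)
  refine Set.countable_univ_iff.1
    ((Set.countable_iUnion fun n => (finite_sphere n).countable).mono fun v _ => ?_)
  obtain ⟨p⟩ := hconn.preconnected v o
  exact Set.mem_iUnion.2 ⟨p.length, p, rfl⟩

theorem first_moment_resistance_upper_bound_general [Countable V] (G : SimpleGraph V)
    [G.LocallyFinite] {D : ℕ} (hdeg : ∀ x : V, G.degree x ≤ D) {o : V}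
    (ho : 0 < G.degree o) {B : Set V} (hoB : o ∈ B)
    {ν : Measure (ℕ → Option V × Option V)} (hν : IsKilledPairLaw G B o o ν) :
    ∫⁻ ω, collisions B ω ∂ν ≤ D * effRes G {o} Bᶜ := by
  have ho' : (G.degree o : ℝ≥0∞) ≠ 0 := by exact_mod_cast ho.ne'
  calc ∫⁻ ω, collisions B ω ∂ν
      ≤ ∑' (n) (x), kernelPow (killedKernel G B) n o x ^ 2 := by
        simpa only [sq] using hν.lintegral_collisions_le
    _ ≤ D * green (killedKernel G B) o o / G.degree o := by
        rw [ENNReal.le_div_iff_mul_le (.inl ho') (.inl (natCast_ne_top _)), mul_comm]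
        exact (isReversible_killedKernel G B).mul_tsum_tsum_kernelPow_sq_le
          (fun x => by exact_mod_cast hdeg x) o
    _ ≤ D * effRes G {o} Bᶜ := by
        rw [mul_div_assoc]
        gcongr
        exact green_div_degree_le_effRes hoB

/-- If moreover every vertex of `G` has degree at most `6`, then
the expected number of collisions of two independent simple random walks on `G`
killed upon exiting `B`, both started at `0`, is at most `6 R_eff(0, V∖B)`. -/
theorem first_moment_resistance_upper_bound
    (G : SimpleGraph V) [G.LocallyFinite] (hconn : G.Connected) (hnt : Nontrivial V)
    (hdeg : ∀ x : V, G.degree x ≤ 6)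
    (o : V) (B : Set V) (hB : B.Finite) (hoB : o ∈ B) (hBV : B ≠ Set.univ)
    (ν : Measure (ℕ → Option V × Option V)) (hν : IsKilledPairLaw G B o o ν) :
    ∫⁻ ω, collisions B ω ∂ν ≤ 6 * effRes G {o} Bᶜ := by
  have := countable_of_connected_of_locallyFinite G hconn
  exact first_moment_resistance_upper_bound_general G hdeg
    (hconn.preconnected.degree_pos_of_nontrivial o) hoB hν

end
end
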